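/- For every λ > 0 there exists a unique C³ function p : T → ℝ satisfying the kernel equation p_{xxx} + p_{yyy} + p_x + p_y = λp on T together with the boundary conditions p(x,x) = 0 and p_x(x,x) = (λ/3)x for all x ∈ [0,1], and p(0,y) = 0 for all y ∈ [0,1]. -/

import Mathlib

open MeasureTheory

noncomputable section

/-- The closed triangle `T = {(x, y) : 0 ≤ x ≤ y ≤ 1}`. -/
def T : Set (ℝ × ℝ) := {q : ℝ × ℝ | 0 ≤ q.1 ∧ q.1 ≤ q.2 ∧ q.2 ≤ 1}

/-- Partial derivative in the first variable. -/
def pdx (f : ℝ → ℝ → ℝ) (x y : ℝ) : ℝ := deriv (fun x' => f x' y) x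

/-- Partial derivative in the second variable. -/
def pdy (f : ℝ → ℝ → ℝ) (x y : ℝ) : ℝ := deriv (fun y' => f x y') y

/-- An observer kernel for `lam`: a C³ function with
`p_xxx + p_yyy + p_x + p_y = lam p` on `T`, `p(x,x)=0`, `p_x(x,x) = (lam/3)x`,
`p(0,y)=0`. -/
def IsObserverKernel (lam : ℝ) (p : ℝ → ℝ → ℝ) : Prop :=
  ContDiff ℝ 3 (Function.uncurry p) ∧
  (∀ x y : ℝ, (x, y) ∈ T →
    pdx (pdx (pdx p)) x y + pdy (pdy (pdy p)) x y + pdx p x y + pdy p x y = lam * p x y) ∧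
  (∀ x ∈ Set.Icc (0:ℝ) 1, p x x = 0) ∧
  (∀ x ∈ Set.Icc (0:ℝ) 1, pdx p x x = lam / 3 * x) ∧
  (∀ y ∈ Set.Icc (0:ℝ) 1, p 0 y = 0)

open Set Filter Topology Function

/-! ### Partial derivatives -/

theorem hasDerivAt_pdx {f : ℝ → ℝ → ℝ} (hf : ContDiff ℝ 1 (uncurry f)) (x y : ℝ) :
    HasDerivAt (fun x' => f x' y) (pdx f x y) x := by
  have h : ContDiff ℝ 1 (fun x' : ℝ => uncurry f (x', y)) := by fun_prop
  exact ((h.differentiable one_ne_zero) x).hasDerivAt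

theorem hasDerivAt_pdy {f : ℝ → ℝ → ℝ} (hf : ContDiff ℝ 1 (uncurry f)) (x y : ℝ) :
    HasDerivAt (fun y' => f x y') (pdy f x y) y := by
  have h : ContDiff ℝ 1 (fun y' : ℝ => uncurry f (x, y')) := by fun_prop
  exact ((h.differentiable one_ne_zero) y).hasDerivAt

theorem pdx_eq_fderiv {f : ℝ → ℝ → ℝ} (hf : ContDiff ℝ 1 (uncurry f)) (q : ℝ × ℝ) :
    pdx f q.1 q.2 = fderiv ℝ (uncurry f) q (1, 0) := by
  have h1 : HasFDerivAt (uncurry f) (fderiv ℝ (uncurry f) q) (q.1, q.2) :=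
    ((hf.differentiable one_ne_zero) q).hasFDerivAt
  have h2 : HasDerivAt (fun x' : ℝ => (x', q.2)) ((1 : ℝ), (0 : ℝ)) q.1 :=
    (hasDerivAt_id q.1).prodMk (hasDerivAt_const _ _)
  exact (h1.comp_hasDerivAt q.1 h2).deriv

theorem pdy_eq_fderiv {f : ℝ → ℝ → ℝ} (hf : ContDiff ℝ 1 (uncurry f)) (q : ℝ × ℝ) :
    pdy f q.1 q.2 = fderiv ℝ (uncurry f) q (0, 1) := by
  have h1 : HasFDerivAt (uncurry f) (fderiv ℝ (uncurry f) q) (q.1, q.2) :=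
    ((hf.differentiable one_ne_zero) q).hasFDerivAt
  have h2 : HasDerivAt (fun y' : ℝ => (q.1, y')) ((0 : ℝ), (1 : ℝ)) q.2 :=
    (hasDerivAt_const _ _).prodMk (hasDerivAt_id q.2)
  exact (h1.comp_hasDerivAt q.2 h2).deriv

theorem contDiff_pdx {f : ℝ → ℝ → ℝ} {n : ℕ} (hf : ContDiff ℝ (n + 1) (uncurry f)) :
    ContDiff ℝ n (uncurry (pdx f)) := by
  have h1 : ContDiff ℝ 1 (uncurry f) := hf.of_le (by simp)
  have : uncurry (pdx f) = fun q => fderiv ℝ (uncurry f) q (1, 0) :=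
    funext fun q => pdx_eq_fderiv h1 q
  rw [this]
  exact (hf.fderiv_right le_rfl).clm_apply contDiff_const

theorem contDiff_pdy {f : ℝ → ℝ → ℝ} {n : ℕ} (hf : ContDiff ℝ (n + 1) (uncurry f)) :
    ContDiff ℝ n (uncurry (pdy f)) := by
  have h1 : ContDiff ℝ 1 (uncurry f) := hf.of_le (by simp)
  have : uncurry (pdy f) = fun q => fderiv ℝ (uncurry f) q (0, 1) :=
    funext fun q => pdy_eq_fderiv h1 q
  rw [this]
  exact (hf.fderiv_right le_rfl).clm_apply contDiff_const

theorem pdx_pdy_comm {f : ℝ → ℝ → ℝ} (hf : ContDiff ℝ 2 (uncurry f)) :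
    pdx (pdy f) = pdy (pdx f) := by
  have h1 : ContDiff ℝ 1 (uncurry f) := hf.of_le one_le_two
  have hfd : Differentiable ℝ (fderiv ℝ (uncurry f)) :=
    (hf.fderiv_right (m := 1) (by norm_num)).differentiable one_ne_zero
  have hx : uncurry (pdx f) = fun q => fderiv ℝ (uncurry f) q (1, 0) :=
    funext fun q => pdx_eq_fderiv h1 q
  have hy : uncurry (pdy f) = fun q => fderiv ℝ (uncurry f) q (0, 1) :=
    funext fun q => pdy_eq_fderiv h1 q
  have key (v w q : ℝ × ℝ) : fderiv ℝ (fun q => fderiv ℝ (uncurry f) q v) q w =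
      fderiv ℝ (fderiv ℝ (uncurry f)) q w v := by
    rw [fderiv_clm_apply (hfd q) (differentiableAt_const _)]
    simp
  funext x y
  have e1 := pdx_eq_fderiv (f := pdy f) (contDiff_pdy (n := 1) hf) (x, y)
  have e2 := pdy_eq_fderiv (f := pdx f) (contDiff_pdx (n := 1) hf) (x, y)
  rw [hy, key] at e1
  rw [hx, key] at e2
  have hs : IsSymmSndFDerivAt ℝ (uncurry f) (x, y) :=
    hf.contDiffAt.isSymmSndFDerivAt (by simp)
  exact e1.trans ((hs.eq _ _).trans e2.symm)

theorem contDiff_succ_of_partials {f f₁ f₂ : ℝ → ℝ → ℝ} {n : ℕ}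
    (h₁ : ∀ x y, HasDerivAt (fun x' => f x' y) (f₁ x y) x)
    (h₂ : ∀ x y, HasDerivAt (fun y' => f x y') (f₂ x y) y)
    (c₁ : ContDiff ℝ n (uncurry f₁)) (c₂ : ContDiff ℝ n (uncurry f₂)) :
    ContDiff ℝ (n + 1) (uncurry f) := by
  rw [contDiff_succ_iff_hasFDerivAt]
  refine ⟨fun q => (ContinuousLinearMap.toSpanSingleton ℝ (f₁ q.1 q.2)).coprod
    (ContinuousLinearMap.toSpanSingleton ℝ (f₂ q.1 q.2)), ?_, fun q => ?_⟩
  · have : (fun q : ℝ × ℝ => (ContinuousLinearMap.toSpanSingleton ℝ (f₁ q.1 q.2)).coprod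
        (ContinuousLinearMap.toSpanSingleton ℝ (f₂ q.1 q.2))) = fun q =>
        uncurry f₁ q • ContinuousLinearMap.fst ℝ ℝ ℝ +
          uncurry f₂ q • ContinuousLinearMap.snd ℝ ℝ ℝ := by
      funext q
      ext <;> simp [uncurry]
    rw [this]
    fun_prop
  · have hc (g : ℝ → ℝ → ℝ) (hg : Continuous (uncurry g)) : ContinuousAt
        (uncurry fun x y => ContinuousLinearMap.toSpanSingleton ℝ (g x y)) q := by
      have : (uncurry fun x y => ContinuousLinearMap.toSpanSingleton ℝ (g x y)) =
          fun q => uncurry g q • (ContinuousLinearMap.id ℝ ℝ) := by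
        funext q
        ext
        simp [uncurry]
      rw [this]
      fun_prop
    exact (hasStrictFDerivAt_uncurry_coprod
      (f₁ := fun x y => ContinuousLinearMap.toSpanSingleton ℝ (f₁ x y))
      (f₂ := fun x y => ContinuousLinearMap.toSpanSingleton ℝ (f₂ x y))
      (Eventually.of_forall fun v => (h₁ v.1 v.2).hasFDerivAt)
      (Eventually.of_forall fun v => (h₂ v.1 v.2).hasFDerivAt)
      (hc f₁ c₁.continuous) (hc f₂ c₂.continuous)).hasFDerivAt

theorem hasDerivAt_comp_partials {f : ℝ → ℝ → ℝ} (hf : ContDiff ℝ 1 (uncurry f))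
    {γ δ : ℝ → ℝ} {γ' δ' r : ℝ} (hγ : HasDerivAt γ γ' r) (hδ : HasDerivAt δ δ' r) :
    HasDerivAt (fun r => f (γ r) (δ r))
      (γ' * pdx f (γ r) (δ r) + δ' * pdy f (γ r) (δ r)) r := by
  have hd := ((hf.differentiable one_ne_zero) (γ r, δ r)).hasFDerivAt
  have h2 := HasFDerivAt.comp_hasDerivAt (f := fun r => (γ r, δ r)) r hd (hγ.prodMk hδ)
  have h3 : (γ', δ') = γ' • ((1 : ℝ), (0 : ℝ)) + δ' • ((0 : ℝ), (1 : ℝ)) := by simp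
  rw [h3, map_add, map_smul, map_smul, ← pdx_eq_fderiv hf (γ r, δ r),
    ← pdy_eq_fderiv hf (γ r, δ r)] at h2
  exact h2

/-! ### Differentiation under the integral sign -/

theorem hasDerivAt_intervalIntegral_of_continuous {E : Type*} [NormedAddCommGroup E]
    [NormedSpace ℝ E] {F F' : ℝ → ℝ → E} (hF : Continuous (uncurry F))
    (hF' : Continuous (uncurry F')) (h : ∀ x θ, HasDerivAt (fun x' => F x' θ) (F' x θ) x)
    (a b x : ℝ) :
    HasDerivAt (fun x' => ∫ θ in a..b, F x' θ) (∫ θ in a..b, F' x θ) x := by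
  obtain ⟨C, hC⟩ := ((isCompact_Icc (a := x - 1) (b := x + 1)).prod
    (isCompact_uIcc (a := a) (b := b))).exists_bound_of_continuousOn hF'.continuousOn
  refine (intervalIntegral.hasDerivAt_integral_of_dominated_loc_of_deriv_le
    (s := Icc (x - 1) (x + 1)) (bound := fun _ => C) (Icc_mem_nhds (by linarith) (by linarith))
    (Eventually.of_forall fun x' => ?_) ?_ ?_ (ae_of_all _ fun θ hθ x' hx' => ?_) (by simp)
    (ae_of_all _ fun θ _ x' _ => h x' θ)).2
  · exact (hF.comp (Continuous.prodMk_right x')).aestronglyMeasurable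
  · exact (hF.comp (Continuous.prodMk_right x)).intervalIntegrable _ _
  · exact (hF'.comp (Continuous.prodMk_right x)).aestronglyMeasurable
  · exact hC (x', θ) ⟨hx', uIoc_subset_uIcc hθ⟩

theorem hasDerivAt_intervalIntegral_right {F F' : ℝ → ℝ → ℝ} (hF : Continuous (uncurry F))
    (hF' : Continuous (uncurry F')) (h : ∀ x θ, HasDerivAt (fun x' => F x' θ) (F' x θ) x)
    (a t : ℝ) :
    HasDerivAt (fun t' => ∫ θ in a..t', F t' θ) (F t t + ∫ θ in a..t, F' t θ) t := by
  have hc : ContDiff ℝ ((0 : ℕ) + 1) (uncurry fun r x => ∫ θ in a..r, F x θ) := by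
    refine contDiff_succ_of_partials (f₁ := fun r x => F x r)
      (f₂ := fun r x => ∫ θ in a..r, F' x θ) (fun r x => ?_) (fun r x => ?_) ?_ ?_
    · have : Continuous (F x) := hF.comp (Continuous.prodMk_right x)
      exact this.integral_hasStrictDerivAt a r |>.hasDerivAt
    · exact hasDerivAt_intervalIntegral_of_continuous hF hF' h a r x
    · simpa using! hF.comp continuous_swap
    · have := intervalIntegral.continuous_parametric_primitive_of_continuous (μ := volume)
        (a₀ := a) hF'
      simpa using! this.comp continuous_swap
  have hc' : ContDiff ℝ 1 (uncurry fun r x => ∫ θ in a..r, F x θ) := by simpa using! hc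
  have h2 := hasDerivAt_comp_partials hc' (hasDerivAt_id t) (hasDerivAt_id t)
  have hFt : Continuous (F t) := hF.comp (Continuous.prodMk_right t)
  have e1 : pdx (fun r x => ∫ θ in a..r, F x θ) t t = F t t :=
    (hFt.integral_hasStrictDerivAt a t).hasDerivAt.deriv
  have e2 : pdy (fun r x => ∫ θ in a..r, F x θ) t t = ∫ θ in a..t, F' t θ :=
    (hasDerivAt_intervalIntegral_of_continuous hF hF' h a t t).deriv
  simpa [e1, e2] using! h2

/-! ### Superpositions of exponentials along a circle -/

/-- The real part of `(2πi)⁻¹ ∮ exp (x a(z) + y b(z)) η(z) dz` over the circle `|z| = r`. -/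
def contourKernel (r : ℝ) (a b η : ℂ → ℂ) (x y : ℝ) : ℝ :=
  ((2 * Real.pi * Complex.I)⁻¹ * ∮ z in C(0, r), Complex.exp (x * a z + y * b z) * η z).re

section contourKernel

variable {r : ℝ} {a b η : ℂ → ℂ}

theorem continuous_comp_circleMap (hr : 0 ≤ r) {f : ℂ → ℂ}
    (hf : ContinuousOn f (Metric.sphere 0 r)) : Continuous fun θ => f (circleMap 0 r θ) :=
  hf.comp_continuous (continuous_circleMap 0 r) fun θ => circleMap_mem_sphere 0 hr θ

theorem continuous_contourKernel_integrand (hr : 0 ≤ r)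
    (ha : ContinuousOn a (Metric.sphere 0 r)) (hb : ContinuousOn b (Metric.sphere 0 r))
    (hη : ContinuousOn η (Metric.sphere 0 r)) :
    Continuous fun q : (ℝ × ℝ) × ℝ =>
      (Complex.exp (q.1.1 * a (circleMap 0 r q.2) + q.1.2 * b (circleMap 0 r q.2)) *
        ((2 * Real.pi * Complex.I)⁻¹ * (circleMap 0 r q.2 * Complex.I) *
          η (circleMap 0 r q.2))).re := by
  have key {A B h : ℝ → ℂ} (hA : Continuous A) (hB : Continuous B) (hh : Continuous h) :
      Continuous fun q : (ℝ × ℝ) × ℝ =>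
        (Complex.exp (q.1.1 * A q.2 + q.1.2 * B q.2) * h q.2).re :=
    Complex.continuous_re.comp (by fun_prop)
  exact key (continuous_comp_circleMap hr ha) (continuous_comp_circleMap hr hb)
    ((continuous_const.mul ((continuous_circleMap 0 r).mul continuous_const)).mul
      (continuous_comp_circleMap hr hη))

theorem contourKernel_eq_integral (hr : 0 ≤ r)
    (ha : ContinuousOn a (Metric.sphere 0 r)) (hb : ContinuousOn b (Metric.sphere 0 r))
    (hη : ContinuousOn η (Metric.sphere 0 r)) (x y : ℝ) :
    contourKernel r a b η x y = ∫ θ in (0 : ℝ)..2 * Real.pi,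
      (Complex.exp (x * a (circleMap 0 r θ) + y * b (circleMap 0 r θ)) *
        ((2 * Real.pi * Complex.I)⁻¹ * (circleMap 0 r θ * Complex.I) *
          η (circleMap 0 r θ))).re := by
  have h : (2 * Real.pi * Complex.I : ℂ)⁻¹ *
      ∮ z in C(0, r), Complex.exp (x * a z + y * b z) * η z =
      ∫ θ in (0 : ℝ)..2 * Real.pi,
        Complex.exp (x * a (circleMap 0 r θ) + y * b (circleMap 0 r θ)) *
        ((2 * Real.pi * Complex.I)⁻¹ * (circleMap 0 r θ * Complex.I) * η (circleMap 0 r θ)) := by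
    rw [circleIntegral, ← intervalIntegral.integral_const_mul]
    refine intervalIntegral.integral_congr fun θ _ => ?_
    simp only [deriv_circleMap, smul_eq_mul]
    ring
  have hA := continuous_comp_circleMap hr ha
  have hB := continuous_comp_circleMap hr hb
  have hh := continuous_comp_circleMap hr hη
  have hi : Continuous fun θ => Complex.exp (x * a (circleMap 0 r θ) + y * b (circleMap 0 r θ)) *
      ((2 * Real.pi * Complex.I)⁻¹ * (circleMap 0 r θ * Complex.I) * η (circleMap 0 r θ)) := by
    exact (((continuous_const.mul hA).add (continuous_const.mul hB)).cexp).mul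
      ((continuous_const.mul ((continuous_circleMap 0 r).mul continuous_const)).mul hh)
  rw [contourKernel, h]
  exact (Complex.reCLM.intervalIntegral_comp_comm (hi.intervalIntegrable _ _)).symm

theorem hasDerivAt_contourKernel_fst (hr : 0 ≤ r) (ha : ContinuousOn a (Metric.sphere 0 r))
    (hb : ContinuousOn b (Metric.sphere 0 r)) (hη : ContinuousOn η (Metric.sphere 0 r))
    (x y : ℝ) :
    HasDerivAt (fun x' => contourKernel r a b η x' y)
      (contourKernel r a b (fun z => a z * η z) x y) x := by
  rw [contourKernel_eq_integral (η := fun z => a z * η z) hr ha hb (ha.mul hη)]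
  simp only [contourKernel_eq_integral hr ha hb hη]
  have hcont : Continuous fun q : ℝ × ℝ => ((q.1, y), q.2) := by fun_prop
  refine hasDerivAt_intervalIntegral_of_continuous
    (F := fun x' θ => (Complex.exp (x' * a (circleMap 0 r θ) + y * b (circleMap 0 r θ)) *
      ((2 * Real.pi * Complex.I)⁻¹ * (circleMap 0 r θ * Complex.I) * η (circleMap 0 r θ))).re)
    (F' := fun x' θ => (Complex.exp (x' * a (circleMap 0 r θ) + y * b (circleMap 0 r θ)) *
      ((2 * Real.pi * Complex.I)⁻¹ * (circleMap 0 r θ * Complex.I) *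
        (a (circleMap 0 r θ) * η (circleMap 0 r θ)))).re)
    ((continuous_contourKernel_integrand hr ha hb hη).comp hcont)
    ((continuous_contourKernel_integrand hr ha hb (ha.mul hη)).comp hcont)
    (fun x θ => ?_) _ _ x
  have h1 : HasDerivAt (fun x' : ℝ => (x' : ℂ) * a (circleMap 0 r θ) + y * b (circleMap 0 r θ))
      (a (circleMap 0 r θ)) x := by
    simpa using ((Complex.ofRealCLM.hasDerivAt (x := x)).mul_const
      (a (circleMap 0 r θ))).add_const (y * b (circleMap 0 r θ))
  have h2 := Complex.reCLM.hasFDerivAt.comp_hasDerivAt x (h1.cexp.mul_const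
    ((2 * Real.pi * Complex.I)⁻¹ * (circleMap 0 r θ * Complex.I) * η (circleMap 0 r θ)))
  refine h2.congr_deriv ?_
  simp only [Complex.reCLM_apply]
  congr 1
  ring

theorem contourKernel_swap (x y : ℝ) :
    contourKernel r a b η x y = contourKernel r b a η y x := by
  simp only [contourKernel, add_comm]

theorem hasDerivAt_contourKernel_snd (hr : 0 ≤ r) (ha : ContinuousOn a (Metric.sphere 0 r))
    (hb : ContinuousOn b (Metric.sphere 0 r)) (hη : ContinuousOn η (Metric.sphere 0 r))
    (x y : ℝ) :
    HasDerivAt (fun y' => contourKernel r a b η x y')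
      (contourKernel r a b (fun z => b z * η z) x y) y := by
  simp only [contourKernel_swap x]
  exact hasDerivAt_contourKernel_fst hr hb ha hη y x

theorem pdx_contourKernel (hr : 0 ≤ r) (ha : ContinuousOn a (Metric.sphere 0 r))
    (hb : ContinuousOn b (Metric.sphere 0 r)) (hη : ContinuousOn η (Metric.sphere 0 r)) :
    pdx (contourKernel r a b η) = contourKernel r a b (fun z => a z * η z) :=
  funext₂ fun x y => (hasDerivAt_contourKernel_fst hr ha hb hη x y).deriv

theorem pdy_contourKernel (hr : 0 ≤ r) (ha : ContinuousOn a (Metric.sphere 0 r))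
    (hb : ContinuousOn b (Metric.sphere 0 r)) (hη : ContinuousOn η (Metric.sphere 0 r)) :
    pdy (contourKernel r a b η) = contourKernel r a b (fun z => b z * η z) :=
  funext₂ fun x y => (hasDerivAt_contourKernel_snd hr ha hb hη x y).deriv

theorem contDiff_contourKernel (hr : 0 ≤ r) (ha : ContinuousOn a (Metric.sphere 0 r))
    (hb : ContinuousOn b (Metric.sphere 0 r)) (hη : ContinuousOn η (Metric.sphere 0 r)) (n : ℕ) :
    ContDiff ℝ n (uncurry (contourKernel r a b η)) := by
  induction n generalizing η with
  | zero =>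
    simp only [Nat.cast_zero, contDiff_zero, uncurry_def, contourKernel_eq_integral hr ha hb hη]
    exact intervalIntegral.continuous_parametric_intervalIntegral_of_continuous'
      (continuous_contourKernel_integrand hr ha hb hη) _ _
  | succ n ih =>
    push_cast
    exact contDiff_succ_of_partials (hasDerivAt_contourKernel_fst hr ha hb hη)
      (hasDerivAt_contourKernel_snd hr ha hb hη) (ih (ha.mul hη)) (ih (hb.mul hη))

theorem contourKernel_congr (hr : 0 ≤ r) {η' : ℂ → ℂ}
    (h : ∀ z ∈ Metric.sphere (0 : ℂ) r, η z = η' z) :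
    contourKernel r a b η = contourKernel r a b η' := by
  funext x y
  simp only [contourKernel]
  rw [circleIntegral.integral_congr hr (g := fun z => Complex.exp (x * a z + y * b z) * η' z)]
  intro z hz
  simp only [h z hz]

theorem contourKernel_linear (hr : 0 ≤ r) (ha : ContinuousOn a (Metric.sphere 0 r))
    (hb : ContinuousOn b (Metric.sphere 0 r)) {η' : ℂ → ℂ}
    (hη : ContinuousOn η (Metric.sphere 0 r)) (hη' : ContinuousOn η' (Metric.sphere 0 r))
    (c d x y : ℝ) :
    contourKernel r a b (fun z => c * η z + d * η' z) x y =
      c * contourKernel r a b η x y + d * contourKernel r a b η' x y := by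
  have hcont : Continuous fun θ : ℝ => ((x, y), θ) := by fun_prop
  have hsum : ContinuousOn (fun z => c * η z + d * η' z) (Metric.sphere 0 r) := by fun_prop
  rw [contourKernel_eq_integral hr ha hb hη, contourKernel_eq_integral hr ha hb hη',
    contourKernel_eq_integral hr ha hb hsum,
    ← intervalIntegral.integral_const_mul, ← intervalIntegral.integral_const_mul,
    ← intervalIntegral.integral_add]
  · congr 1
    funext θ
    rw [← Complex.re_ofReal_mul, ← Complex.re_ofReal_mul, ← Complex.add_re]
    congr 1
    ring
  · exact (((continuous_contourKernel_integrand hr ha hb hη).comp hcont).const_mul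
      c).intervalIntegrable _ _
  · exact (((continuous_contourKernel_integrand hr ha hb hη').comp hcont).const_mul
      d).intervalIntegrable _ _

theorem contourKernel_add (hr : 0 ≤ r) (ha : ContinuousOn a (Metric.sphere 0 r))
    (hb : ContinuousOn b (Metric.sphere 0 r)) {η' : ℂ → ℂ}
    (hη : ContinuousOn η (Metric.sphere 0 r)) (hη' : ContinuousOn η' (Metric.sphere 0 r))
    (x y : ℝ) :
    contourKernel r a b (fun z => η z + η' z) x y =
      contourKernel r a b η x y + contourKernel r a b η' x y := by
  simpa using contourKernel_linear hr ha hb hη hη' 1 1 x y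

end contourKernel

/-! ### The characteristic symbol -/

theorem contourKernel_eq_of_hasDerivAt {r R : ℝ} (hr : 0 < r) (hrR : r < R) {a b η A f : ℂ → ℂ}
    (ha : ContinuousOn a (Metric.sphere 0 r)) (hb : ContinuousOn b (Metric.sphere 0 r))
    (hη : ContinuousOn η (Metric.sphere 0 r)) (hA : DifferentiableOn ℂ A (Metric.ball 0 R))
    {x y : ℝ}
    (hf : ∀ z ∈ Metric.sphere (0 : ℂ) r,
      HasDerivAt f (Complex.exp (x * a z + y * b z) * η z - z⁻¹ * A z) z) :
    contourKernel r a b η x y = (A 0).re := by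
  have hsub : Metric.closedBall (0 : ℂ) r ⊆ Metric.ball 0 R := Metric.closedBall_subset_ball hrR
  have hne : ∀ z ∈ Metric.sphere (0 : ℂ) r, z ≠ 0 := fun z hz => Metric.ne_of_mem_sphere hz hr.ne'
  have h0 := circleIntegral.integral_eq_zero_of_hasDerivWithinAt hr.le
    fun z hz => (hf z hz).hasDerivWithinAt
  have hg : ContinuousOn (fun z => Complex.exp (x * a z + y * b z) * η z)
      (Metric.sphere 0 r) := by fun_prop
  have hAc : ContinuousOn (fun z => z⁻¹ * A z) (Metric.sphere 0 r) :=
    (continuousOn_id.inv₀ hne).mul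
      (hA.continuousOn.mono (Metric.sphere_subset_closedBall.trans hsub))
  rw [circleIntegral.integral_sub (hg.circleIntegrable hr.le) (hAc.circleIntegrable hr.le),
    sub_eq_zero] at h0
  have hC := (hA.mono hsub).circleIntegral_sub_inv_smul (Metric.mem_ball_self hr)
  simp only [sub_zero, smul_eq_mul] at hC
  rw [contourKernel, h0, hC, inv_mul_cancel_left₀]
  simp [Real.pi_ne_zero]

theorem exists_sqrt_symbol {lam : ℝ} (hlam : 0 < lam) :
    ∃ R : ℝ, 0 < R ∧ ∃ q : ℂ → ℂ, DifferentiableOn ℂ q (Metric.ball 0 R) ∧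
      ∀ z, q z ^ 2 = lam / 6 - z ^ 2 / 3 - z ^ 6 / 3 := by
  have hcont : Continuous fun z : ℂ => (lam / 6 - z ^ 2 / 3 - z ^ 6 / 3 : ℂ) := by fun_prop
  have hmem : (lam / 6 - 0 ^ 2 / 3 - 0 ^ 6 / 3 : ℂ) ∈ Complex.slitPlane := by
    have : (lam / 6 - 0 ^ 2 / 3 - 0 ^ 6 / 3 : ℂ) = ((lam / 6 : ℝ) : ℂ) := by simp
    rw [this, Complex.ofReal_mem_slitPlane]
    positivity
  obtain ⟨R, hR, hball⟩ := Metric.mem_nhds_iff.1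
    (hcont.continuousAt.preimage_mem_nhds (x := 0) (Complex.isOpen_slitPlane.mem_nhds hmem))
  refine ⟨R, hR, fun z => (lam / 6 - z ^ 2 / 3 - z ^ 6 / 3 : ℂ) ^ (2 : ℂ)⁻¹, fun z hz => ?_,
    fun z => ?_⟩
  · refine (DifferentiableAt.cpow (f := fun z => (lam / 6 - z ^ 2 / 3 - z ^ 6 / 3 : ℂ))
      (by fun_prop) (by fun_prop) (hball hz)).differentiableWithinAt
  · have := Complex.cpow_nat_inv_pow (lam / 6 - z ^ 2 / 3 - z ^ 6 / 3 : ℂ) two_ne_zero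
    simpa only [Nat.cast_ofNat] using this

/-- The data `(r, q, ρ, ρ')` entering the contour representations: `q` is a holomorphic square root
of `λ/6 - z²/3 - z⁶/3` near the closed disc of radius `r`, and `ρ = q / z`. -/
structure SymbolData (lam : ℝ) where
  /-- radius of the contour -/
  r : ℝ
  /-- radius of a larger disc of holomorphy -/
  R : ℝ
  /-- square root -/
  q : ℂ → ℂ
  r_pos : 0 < r
  r_lt : r < R
  diff : DifferentiableOn ℂ q (Metric.ball 0 R)
  sq : ∀ z, q z ^ 2 = lam / 6 - z ^ 2 / 3 - z ^ 6 / 3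

namespace SymbolData

variable {lam : ℝ} (S : SymbolData lam)

/-- The branch `q / z`. -/
def rho (z : ℂ) : ℂ := S.q z / z

theorem ne_zero {z : ℂ} (hz : z ∈ Metric.sphere (0 : ℂ) S.r) : z ≠ 0 :=
  Metric.ne_of_mem_sphere hz S.r_pos.ne'

theorem mem_ball {z : ℂ} (hz : z ∈ Metric.sphere (0 : ℂ) S.r) : z ∈ Metric.ball (0 : ℂ) S.R :=
  Metric.closedBall_subset_ball S.r_lt (Metric.sphere_subset_closedBall hz)

theorem differentiableOn_rho : DifferentiableOn ℂ S.rho (Metric.ball 0 S.R \ {0}) :=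
  (S.diff.mono sdiff_subset).div differentiableOn_id fun _ hz => hz.2

theorem isOpen_domain : IsOpen (Metric.ball (0 : ℂ) S.R \ {0}) :=
  Metric.isOpen_ball.sdiff isClosed_singleton

theorem mem_domain {z : ℂ} (hz : z ∈ Metric.sphere (0 : ℂ) S.r) :
    z ∈ Metric.ball (0 : ℂ) S.R \ {0} :=
  ⟨S.mem_ball hz, S.ne_zero hz⟩

theorem hasDerivAt_rho {z : ℂ} (hz : z ∈ Metric.sphere (0 : ℂ) S.r) :
    HasDerivAt S.rho (deriv S.rho z) z :=
  (S.differentiableOn_rho.differentiableAt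
    (S.isOpen_domain.mem_nhds (S.mem_domain hz))).hasDerivAt

theorem continuousOn_rho : ContinuousOn S.rho (Metric.sphere 0 S.r) :=
  S.differentiableOn_rho.continuousOn.mono fun _ hz => S.mem_domain hz

theorem continuousOn_deriv_rho : ContinuousOn (deriv S.rho) (Metric.sphere 0 S.r) :=
  (S.differentiableOn_rho.deriv S.isOpen_domain).continuousOn.mono fun _ hz => S.mem_domain hz

theorem q_eq {z : ℂ} (hz : z ∈ Metric.sphere (0 : ℂ) S.r) : S.q z = S.rho z * z :=
  (div_mul_cancel₀ _ (S.ne_zero hz)).symm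

theorem sq_mul_rho_sq {z : ℂ} (hz : z ∈ Metric.sphere (0 : ℂ) S.r) :
    z ^ 2 * S.rho z ^ 2 = lam / 6 - z ^ 2 / 3 - z ^ 6 / 3 := by
  have := S.ne_zero hz
  rw [← S.sq, rho]
  field_simp

/-- The kernel `E` of the Cauchy problem in characteristic variables. -/
def fundamental : ℝ → ℝ → ℝ :=
  contourKernel S.r (fun z => z ^ 2) S.rho (fun z => -deriv S.rho z)

/-- The contour representation of the observer kernel. -/
def observer : ℝ → ℝ → ℝ :=
  contourKernel S.r (fun z => z ^ 2 - S.rho z) (fun z => z ^ 2 + S.rho z)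
    (fun z => deriv S.rho z + 2 * z)

theorem contDiff_fundamental (n : ℕ) : ContDiff ℝ n (uncurry S.fundamental) :=
  contDiff_contourKernel S.r_pos.le (by fun_prop) S.continuousOn_rho
    S.continuousOn_deriv_rho.neg n

theorem fundamental_eq (s t : ℝ) :
    2 * pdx (pdx (pdx S.fundamental)) s t + 6 * pdx (pdy (pdy S.fundamental)) s t +
      2 * pdx S.fundamental s t = lam * S.fundamental s t := by
  have h1 := S.continuousOn_rho
  have h2 := S.continuousOn_deriv_rho
  have hz : ContinuousOn (fun z : ℂ => z ^ 2) (Metric.sphere 0 S.r) := by fun_prop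
  have hr := S.r_pos.le
  simp only [fundamental]
  rw [pdy_contourKernel hr hz h1 (by fun_prop), pdy_contourKernel hr hz h1 (by fun_prop),
    pdx_contourKernel hr hz h1 (by fun_prop), pdx_contourKernel hr hz h1 (by fun_prop),
    pdx_contourKernel hr hz h1 (by fun_prop), pdx_contourKernel hr hz h1 (by fun_prop)]
  rw [← contourKernel_linear hr hz h1 (by fun_prop) (by fun_prop),
    ← one_mul (contourKernel _ _ _ _ _ _),
    ← contourKernel_linear hr hz h1 (by fun_prop) (by fun_prop)]
  have h0 := contourKernel_linear hr hz h1 (η := fun z => -deriv S.rho z)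
    (η' := fun z => -deriv S.rho z) (by fun_prop) (by fun_prop) lam 0 s t
  rw [zero_mul, add_zero] at h0
  rw [← h0]
  refine congrFun₂ (contourKernel_congr hr fun z hz => ?_) s t
  have := S.sq_mul_rho_sq hz
  push_cast
  linear_combination (-6 * deriv S.rho z) * this

theorem fundamental_right_zero (s : ℝ) : S.fundamental s 0 = 0 := by
  have h1 := S.continuousOn_rho
  have h2 := S.continuousOn_deriv_rho
  have hq := S.diff
  refine (contourKernel_eq_of_hasDerivAt S.r_pos S.r_lt (by fun_prop) h1 (by fun_prop)
    (A := fun z => 2 * s * z * Complex.exp (s * z ^ 2) * S.q z)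
    (f := fun z => -(Complex.exp (s * z ^ 2) * S.rho z)) (by fun_prop) fun z hz => ?_).trans
    (by simp)
  have hz0 := S.ne_zero hz
  refine ((((hasDerivAt_pow 2 z).const_mul (s : ℂ)).cexp.mul
    (S.hasDerivAt_rho hz)).neg).congr_deriv ?_
  simp only [S.q_eq hz]
  simp
  field_simp
  ring

theorem pdy_fundamental_right_zero (s : ℝ) : pdy S.fundamental s 0 = lam / 6 * s := by
  have h1 := S.continuousOn_rho
  have h2 := S.continuousOn_deriv_rho
  have hq := S.diff
  rw [fundamental, pdy_contourKernel S.r_pos.le (by fun_prop) h1 (by fun_prop)]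
  refine (contourKernel_eq_of_hasDerivAt S.r_pos S.r_lt (by fun_prop) h1 (by fun_prop)
    (A := fun z => s * Complex.exp (s * z ^ 2) * S.q z ^ 2)
    (f := fun z => -(Complex.exp (s * z ^ 2) * (S.rho z ^ 2 / 2))) (by fun_prop)
    fun z hz => ?_).trans ?_
  · have hz0 := S.ne_zero hz
    refine ((((hasDerivAt_pow 2 z).const_mul (s : ℂ)).cexp.mul
      (((S.hasDerivAt_rho hz).pow 2).div_const 2)).neg).congr_deriv ?_
    simp only [S.q_eq hz]
    simp
    field_simp
    ring
  · simp only [S.sq]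
    norm_num
    norm_cast
    rw [mul_comm]

theorem fundamental_left_zero (t : ℝ) : S.fundamental 0 t = 0 := by
  have h1 := S.continuousOn_rho
  have h2 := S.continuousOn_deriv_rho
  obtain rfl | ht := eq_or_ne t 0
  · exact S.fundamental_right_zero 0
  have ht' : (t : ℂ) ≠ 0 := by exact_mod_cast ht
  refine (contourKernel_eq_of_hasDerivAt S.r_pos S.r_lt (by fun_prop) h1 (by fun_prop)
    (A := fun z => 0)
    (f := fun z => -(Complex.exp (t * S.rho z) / t)) (by fun_prop) fun z hz => ?_).trans
    (by simp)
  refine (((((S.hasDerivAt_rho hz).const_mul (t : ℂ)).cexp).div_const _).neg).congr_deriv ?_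
  simp
  field_simp

theorem observer_diagonal (x : ℝ) : S.observer x x = 0 := by
  have h1 := S.continuousOn_rho
  have h2 := S.continuousOn_deriv_rho
  have hq := S.diff
  refine (contourKernel_eq_of_hasDerivAt S.r_pos S.r_lt (by fun_prop) (by fun_prop) (by fun_prop)
    (A := fun z => -(4 * x * z * Complex.exp (2 * x * z ^ 2) * (S.q z + z ^ 3)))
    (f := fun z => Complex.exp (2 * x * z ^ 2) * (S.rho z + z ^ 2)) (by fun_prop)
    fun z hz => ?_).trans (by simp)
  have hz0 := S.ne_zero hz
  refine (((hasDerivAt_pow 2 z).const_mul (2 * x : ℂ)).cexp.mul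
    ((S.hasDerivAt_rho hz).add (hasDerivAt_pow 2 z))).congr_deriv ?_
  have he : (x * (z ^ 2 - S.rho z) + x * (z ^ 2 + S.rho z) : ℂ) = 2 * x * z ^ 2 := by ring
  rw [he]
  simp only [S.q_eq hz]
  simp
  field_simp
  ring

theorem pdx_observer_diagonal (x : ℝ) : pdx S.observer x x = lam / 3 * x := by
  have h1 := S.continuousOn_rho
  have h2 := S.continuousOn_deriv_rho
  have hq := S.diff
  rw [observer, pdx_contourKernel S.r_pos.le (by fun_prop) (by fun_prop) (by fun_prop)]
  refine (contourKernel_eq_of_hasDerivAt S.r_pos S.r_lt (by fun_prop) (by fun_prop) (by fun_prop)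
    (A := fun z => Complex.exp (2 * x * z ^ 2) * (2 * x * S.q z ^ 2 - 4 * x * z ^ 3 * S.q z +
      z * (2 * z ^ 3 - 4 * S.q z)))
    (f := fun z => Complex.exp (2 * x * z ^ 2) * (z ^ 2 * S.rho z - S.rho z ^ 2 / 2)) (by fun_prop)
    fun z hz => ?_).trans ?_
  · have hz0 := S.ne_zero hz
    refine (((hasDerivAt_pow 2 z).const_mul (2 * x : ℂ)).cexp.mul
      (((hasDerivAt_pow 2 z).mul (S.hasDerivAt_rho hz)).sub
      (((S.hasDerivAt_rho hz).pow 2).div_const 2))).congr_deriv ?_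
    have he : (x * (z ^ 2 - S.rho z) + x * (z ^ 2 + S.rho z) : ℂ) = 2 * x * z ^ 2 := by ring
    rw [he]
    simp only [S.q_eq hz]
    simp
    field_simp
    ring
  · simp only [S.sq]
    norm_num
    norm_cast
    ring

theorem observer_left_zero (y : ℝ) : S.observer 0 y = 0 := by
  have h1 := S.continuousOn_rho
  have h2 := S.continuousOn_deriv_rho
  obtain rfl | ht := eq_or_ne y 0
  · exact S.observer_diagonal 0
  have ht' : (y : ℂ) ≠ 0 := by exact_mod_cast ht
  refine (contourKernel_eq_of_hasDerivAt S.r_pos S.r_lt (by fun_prop) (by fun_prop) (by fun_prop)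
    (A := fun z => 0)
    (f := fun z => Complex.exp (y * (z ^ 2 + S.rho z)) / y) (by fun_prop) fun z hz => ?_).trans
    (by simp)
  refine ((((hasDerivAt_pow 2 z).add (S.hasDerivAt_rho hz)).const_mul
    (y : ℂ)).cexp.div_const _).congr_deriv ?_
  simp
  field_simp
  ring

theorem contDiff_observer (n : ℕ) : ContDiff ℝ n (uncurry S.observer) := by
  have h1 := S.continuousOn_rho
  have h2 := S.continuousOn_deriv_rho
  exact contDiff_contourKernel S.r_pos.le (by fun_prop) (by fun_prop) (by fun_prop) n

theorem observer_eq (x y : ℝ) :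
    pdx (pdx (pdx S.observer)) x y + pdy (pdy (pdy S.observer)) x y + pdx S.observer x y +
      pdy S.observer x y = lam * S.observer x y := by
  have h1 := S.continuousOn_rho
  have h2 := S.continuousOn_deriv_rho
  have ha : ContinuousOn (fun z : ℂ => z ^ 2 - S.rho z) (Metric.sphere 0 S.r) := by fun_prop
  have hb : ContinuousOn (fun z : ℂ => z ^ 2 + S.rho z) (Metric.sphere 0 S.r) := by fun_prop
  have hr := S.r_pos.le
  simp only [observer]
  rw [pdx_contourKernel hr ha hb (by fun_prop), pdx_contourKernel hr ha hb (by fun_prop),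
    pdx_contourKernel hr ha hb (by fun_prop), pdy_contourKernel hr ha hb (by fun_prop),
    pdy_contourKernel hr ha hb (by fun_prop), pdy_contourKernel hr ha hb (by fun_prop)]
  have h0 := contourKernel_linear hr ha hb (η := fun z => deriv S.rho z + 2 * z)
    (η' := fun z => deriv S.rho z + 2 * z) (by fun_prop) (by fun_prop) lam 0 x y
  rw [zero_mul, add_zero] at h0
  rw [← h0, ← contourKernel_add hr ha hb (by fun_prop) (by fun_prop),
    ← contourKernel_add hr ha hb (by fun_prop) (by fun_prop),
    ← contourKernel_add hr ha hb (by fun_prop) (by fun_prop)]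
  refine congrFun₂ (contourKernel_congr hr fun z hz => ?_) x y
  have := S.sq_mul_rho_sq hz
  push_cast
  linear_combination (6 * (deriv S.rho z + 2 * z)) * this

end SymbolData

theorem nonempty_symbolData {lam : ℝ} (hlam : 0 < lam) : Nonempty (SymbolData lam) := by
  obtain ⟨R, hR, q, hq, hsq⟩ := exists_sqrt_symbol hlam
  exact ⟨⟨R / 2, R, q, by positivity, by linarith, hq, hsq⟩⟩

/-! ### Integrals over the rectangle `[0, 2] × [0, 1]` -/

/-- The iterated integral over `[0, 2] × [0, 1]`. -/
def rectIntegral (f : ℝ × ℝ → ℝ) : ℝ := ∫ s in (0 : ℝ)..2, ∫ t in (0 : ℝ)..1, f (s, t)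

section rectIntegral

variable {f g : ℝ × ℝ → ℝ}

theorem continuous_inner_integral (hf : Continuous f) (a b : ℝ) :
    Continuous fun s => ∫ t in a..b, f (s, t) :=
  intervalIntegral.continuous_parametric_intervalIntegral_of_continuous'
    (f := fun s t => f (s, t)) (by simpa [uncurry_def] using hf) a b

theorem rectIntegral_add (hf : Continuous f) (hg : Continuous g) :
    rectIntegral (fun q => f q + g q) = rectIntegral f + rectIntegral g := by
  have h (s : ℝ) : ∫ t in (0 : ℝ)..1, (f (s, t) + g (s, t)) =
      (∫ t in (0 : ℝ)..1, f (s, t)) + ∫ t in (0 : ℝ)..1, g (s, t) :=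
    intervalIntegral.integral_add
      (Continuous.intervalIntegrable (by fun_prop) _ _)
      (Continuous.intervalIntegrable (by fun_prop) _ _)
  simp only [rectIntegral, h]
  exact intervalIntegral.integral_add
    ((continuous_inner_integral hf 0 1).intervalIntegrable _ _)
    ((continuous_inner_integral hg 0 1).intervalIntegrable _ _)

theorem rectIntegral_const_mul (c : ℝ) :
    rectIntegral (fun q => c * f q) = c * rectIntegral f := by
  simp only [rectIntegral, intervalIntegral.integral_const_mul]

theorem rectIntegral_mono (hf : Continuous f) (hg : Continuous g)
    (h : ∀ s ∈ Icc (0 : ℝ) 2, ∀ t ∈ Icc (0 : ℝ) 1, f (s, t) ≤ g (s, t)) :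
    rectIntegral f ≤ rectIntegral g :=
  intervalIntegral.integral_mono_on (by norm_num)
    ((continuous_inner_integral hf 0 1).intervalIntegrable _ _)
    ((continuous_inner_integral hg 0 1).intervalIntegrable _ _) fun s hs =>
    intervalIntegral.integral_mono_on (by norm_num)
      (Continuous.intervalIntegrable (by fun_prop) _ _)
      (Continuous.intervalIntegrable (by fun_prop) _ _) fun t ht => h s hs t ht

theorem rectIntegral_nonneg (h : ∀ q, 0 ≤ f q) : 0 ≤ rectIntegral f :=
  intervalIntegral.integral_nonneg (by norm_num) fun _ _ =>
    intervalIntegral.integral_nonneg (by norm_num) fun _ _ => h _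

theorem rectIntegral_swap (hf : Continuous f) :
    rectIntegral f = ∫ t in (0 : ℝ)..1, ∫ s in (0 : ℝ)..2, f (s, t) := by
  refine MeasureTheory.intervalIntegral_intervalIntegral_swap (F := fun s t => f (s, t)) ?_
  have : Continuous (uncurry fun s t => f (s, t)) := by simpa [uncurry_def] using hf
  refine (this.continuousOn.integrableOn_compact
    (isCompact_uIcc.prod isCompact_uIcc)).mono_set (prod_mono uIoc_subset_uIcc uIoc_subset_uIcc)

theorem rectIntegral_snd_deriv (hg : Continuous g)
    (h : ∀ s t, HasDerivAt (fun t' => f (s, t')) (g (s, t)) t)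
    (h0 : ∀ s ∈ Icc (0 : ℝ) 2, f (s, 0) = 0) (h1 : ∀ s ∈ Icc (0 : ℝ) 2, f (s, 1) = 0) :
    rectIntegral g = 0 := by
  refine (intervalIntegral.integral_congr (g := fun _ => (0 : ℝ)) fun s hs => ?_).trans (by simp)
  rw [uIcc_of_le (by norm_num)] at hs
  simp only
  rw [intervalIntegral.integral_eq_sub_of_hasDerivAt (fun t _ => h s t)
    (Continuous.intervalIntegrable (by fun_prop) _ _), h0 s hs, h1 s hs, sub_zero]

theorem rectIntegral_fst_deriv (hg : Continuous g)
    (h : ∀ s t, HasDerivAt (fun s' => f (s', t)) (g (s, t)) s)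
    (h0 : ∀ t ∈ Icc (0 : ℝ) 1, f (0, t) = 0) (h1 : ∀ t ∈ Icc (0 : ℝ) 1, f (2, t) = 0) :
    rectIntegral g = 0 := by
  rw [rectIntegral_swap hg]
  refine (intervalIntegral.integral_congr (g := fun _ => (0 : ℝ)) fun t ht => ?_).trans (by simp)
  rw [uIcc_of_le (by norm_num)] at ht
  simp only
  rw [intervalIntegral.integral_eq_sub_of_hasDerivAt (fun s _ => h s t)
    (Continuous.intervalIntegrable (by fun_prop) _ _), h0 t ht, h1 t ht, sub_zero]

theorem eq_zero_of_rectIntegral_nonpos (hf : Continuous f) (h : ∀ q, 0 ≤ f q)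
    (hI : rectIntegral f ≤ 0) {s t : ℝ} (hs : s ∈ Icc (0 : ℝ) 2) (ht : t ∈ Icc (0 : ℝ) 1) :
    f (s, t) = 0 := by
  by_contra hne
  have hpos : 0 < f (s, t) := lt_of_le_of_ne (h _) (Ne.symm hne)
  refine hI.not_gt (intervalIntegral.integral_pos (by norm_num)
    (continuous_inner_integral hf 0 1).continuousOn
    (fun s _ => intervalIntegral.integral_nonneg (by norm_num) fun _ _ => h _) ⟨s, hs, ?_⟩)
  exact intervalIntegral.integral_pos (by norm_num) (by fun_prop) (fun t _ => h _) ⟨t, ht, hpos⟩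

end rectIntegral

theorem sq_integral_le {f : ℝ → ℝ} (hf : Continuous f) {a b : ℝ} (hab : a ≤ b) :
    (∫ x in a..b, f x) ^ 2 ≤ (b - a) * ∫ x in a..b, f x ^ 2 := by
  obtain rfl | hlt := hab.eq_or_lt
  · simp
  set J := ∫ x in a..b, f x
  have h0 : 0 ≤ ∫ x in a..b, ((b - a) * f x - J) ^ 2 :=
    intervalIntegral.integral_nonneg hab fun _ _ => sq_nonneg _
  have h1 : ∫ x in a..b, ((b - a) * f x - J) ^ 2 =
      (b - a) ^ 2 * (∫ x in a..b, f x ^ 2) - 2 * (b - a) * J * J + (b - a) * J ^ 2 := by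
    have e (x : ℝ) : ((b - a) * f x - J) ^ 2 =
        (b - a) ^ 2 * f x ^ 2 - 2 * (b - a) * J * f x + J ^ 2 := by ring
    simp only [e]
    rw [intervalIntegral.integral_add (Continuous.intervalIntegrable (by fun_prop) _ _)
      (Continuous.intervalIntegrable (by fun_prop) _ _),
      intervalIntegral.integral_sub (Continuous.intervalIntegrable (by fun_prop) _ _)
      (Continuous.intervalIntegrable (by fun_prop) _ _)]
    simp [J]
  rw [h1] at h0
  have h2 : 0 ≤ (b - a) * ((b - a) * (∫ x in a..b, f x ^ 2) - J ^ 2) := by linarith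
  have := nonneg_of_mul_nonneg_right h2 (sub_pos.2 hlt)
  linarith

/-! ### A Carleman identity for a Cauchy–Riemann type system -/

theorem carleman_inequality {u v us ut vs vt vst : ℝ × ℝ → ℝ} (τ : ℝ)
    (cu : Continuous u) (cv : Continuous v) (cus : Continuous us) (cut : Continuous ut)
    (cvs : Continuous vs) (cvt : Continuous vt) (cvst : Continuous vst)
    (hus : ∀ s t, HasDerivAt (fun s' => u (s', t)) (us (s, t)) s)
    (hut : ∀ s t, HasDerivAt (fun t' => u (s, t')) (ut (s, t)) t)
    (hvs : ∀ s t, HasDerivAt (fun s' => v (s', t)) (vs (s, t)) s)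
    (hvt : ∀ s t, HasDerivAt (fun t' => v (s, t')) (vt (s, t)) t)
    (hvst : ∀ s t, HasDerivAt (fun t' => vs (s, t')) (vst (s, t)) t)
    (hvts : ∀ s t, HasDerivAt (fun s' => vt (s', t)) (vst (s, t)) s)
    (u0 : ∀ s ∈ Icc (0 : ℝ) 2, u (s, 0) = 0) (u1 : ∀ s ∈ Icc (0 : ℝ) 2, u (s, 1) = 0)
    (v0 : ∀ s ∈ Icc (0 : ℝ) 2, v (s, 0) = 0) (v1 : ∀ s ∈ Icc (0 : ℝ) 2, v (s, 1) = 0)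
    (ul : ∀ t ∈ Icc (0 : ℝ) 1, u (0, t) = 0) (ur : ∀ t ∈ Icc (0 : ℝ) 1, u (2, t) = 0)
    (vl : ∀ t ∈ Icc (0 : ℝ) 1, v (0, t) = 0) (vr : ∀ t ∈ Icc (0 : ℝ) 1, v (2, t) = 0) :
    8 * τ / 3 * rectIntegral (fun q => u q ^ 2 + v q ^ 2 / 3) ≤
      rectIntegral (fun q => (ut q + 2 * τ * (1 - q.2) * u q +
          (vs q + 2 * τ * (q.1 - 1) * v q) / 3) ^ 2 +
        (vt q + 2 * τ * (1 - q.2) * v q - us q - 2 * τ * (q.1 - 1) * u q) ^ 2 / 3) := by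
  have dt : rectIntegral (fun q => 4 / 3 * (ut q * vs q + u q * vst q) +
      4 * τ * ((1 - q.2) * (2 * u q * ut q + 2 * v q * vt q / 3) -
        (u q ^ 2 + v q ^ 2 / 3))) = 0 := by
    refine rectIntegral_snd_deriv (f := fun q => 4 / 3 * (u q * vs q) +
      4 * τ * ((1 - q.2) * (u q ^ 2 + v q ^ 2 / 3))) (by fun_prop) (fun s t => ?_)
      (fun s hs => ?_) (fun s hs => ?_)
    · refine ((((hut s t).mul (hvst s t)).const_mul (4 / 3)).add
        ((((hasDerivAt_id t).const_sub 1).mul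
          (((hut s t).pow 2).add (((hvt s t).pow 2).div_const 3))).const_mul
          (4 * τ))).congr_deriv ?_
      simp [-mul_eq_mul_left_iff]
      ring
    · simp [u0 s hs, v0 s hs]
    · simp [u1 s hs, v1 s hs]
  have ds : rectIntegral (fun q => -(4 / 3) * (us q * vt q + u q * vst q) +
      4 * τ / 3 * ((q.1 - 1) * (2 * u q * us q + 2 * v q * vs q / 3) +
        (u q ^ 2 + v q ^ 2 / 3))) = 0 := by
    refine rectIntegral_fst_deriv (f := fun q => -(4 / 3) * (u q * vt q) +
      4 * τ / 3 * ((q.1 - 1) * (u q ^ 2 + v q ^ 2 / 3))) (by fun_prop) (fun s t => ?_)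
      (fun t ht => ?_) (fun t ht => ?_)
    · refine ((((hus s t).mul (hvts s t)).const_mul (-(4 / 3))).add
        ((((hasDerivAt_id s).sub_const 1).mul
          (((hus s t).pow 2).add (((hvs s t).pow 2).div_const 3))).const_mul
          (4 * τ / 3))).congr_deriv ?_
      simp [-mul_eq_mul_left_iff]
      ring
    · simp [ul t ht, vl t ht]
    · simp [ur t ht, vr t ht]
  have hdiv := rectIntegral_add (f := fun q => 4 / 3 * (ut q * vs q + u q * vst q) +
      4 * τ * ((1 - q.2) * (2 * u q * ut q + 2 * v q * vt q / 3) -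
        (u q ^ 2 + v q ^ 2 / 3))) (g := fun q => -(4 / 3) * (us q * vt q + u q * vst q) +
      4 * τ / 3 * ((q.1 - 1) * (2 * u q * us q + 2 * v q * vs q / 3) +
        (u q ^ 2 + v q ^ 2 / 3))) (by fun_prop) (by fun_prop)
  have hsum := rectIntegral_add (f := fun q => 8 * τ / 3 * (u q ^ 2 + v q ^ 2 / 3))
    (g := fun q => (4 / 3 * (ut q * vs q + u q * vst q) +
      4 * τ * ((1 - q.2) * (2 * u q * ut q + 2 * v q * vt q / 3) -
        (u q ^ 2 + v q ^ 2 / 3))) + (-(4 / 3) * (us q * vt q + u q * vst q) +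
      4 * τ / 3 * ((q.1 - 1) * (2 * u q * us q + 2 * v q * vs q / 3) +
        (u q ^ 2 + v q ^ 2 / 3)))) (by fun_prop) (by fun_prop)
  rw [hdiv, dt, ds, rectIntegral_const_mul, add_zero, add_zero] at hsum
  rw [← hsum]
  refine rectIntegral_mono (by fun_prop) (by fun_prop) fun s _ t _ => ?_
  have h1 := sq_nonneg (ut (s, t) - 2 * τ * (1 - t) * u (s, t) -
    (vs (s, t) - 2 * τ * (s - 1) * v (s, t)) / 3)
  have h2 := sq_nonneg (vt (s, t) - 2 * τ * (1 - t) * v (s, t) + us (s, t) -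
    2 * τ * (s - 1) * u (s, t))
  linear_combination h1 + h2 / 3

/-- The quadratic function whose positivity region in `[0, 2] × [0, 1]` is the open triangle. -/
def triangleWeight (q : ℝ × ℝ) : ℝ := (1 - q.2) ^ 2 - (q.1 - 1) ^ 2

theorem continuous_triangleWeight : Continuous triangleWeight := by
  unfold triangleWeight
  fun_prop

theorem hasDerivAt_triangleWeight_fst (s t : ℝ) :
    HasDerivAt (fun s' => triangleWeight (s', t)) (-2 * (s - 1)) s := by
  refine ((((hasDerivAt_id s).sub_const 1).pow 2).const_sub ((1 - t) ^ 2)).congr_deriv ?_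
  simp

theorem hasDerivAt_triangleWeight_snd (s t : ℝ) :
    HasDerivAt (fun t' => triangleWeight (s, t')) (-2 * (1 - t)) t := by
  refine ((((hasDerivAt_id t).const_sub 1).pow 2).sub_const ((s - 1) ^ 2)).congr_deriv ?_
  simp

theorem triangleWeight_nonpos_left {s t : ℝ} (hs : s = 0 ∨ s = 2) (ht : t ∈ Icc (0 : ℝ) 1) :
    triangleWeight (s, t) ≤ 0 := by
  obtain ⟨h1, h2⟩ := ht
  simp only [triangleWeight]
  rcases hs with rfl | rfl <;> nlinarith

theorem triangleWeight_nonpos_top (s : ℝ) : triangleWeight (s, 1) ≤ 0 := by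
  simp only [triangleWeight]
  nlinarith

theorem triangleWeight_pos_iff {s t : ℝ} (ht : t ≤ 1) :
    0 < triangleWeight (s, t) ↔ t < s ∧ s < 2 - t := by
  simp only [triangleWeight, sub_pos, sq_lt_sq, abs_lt, abs_of_nonneg (sub_nonneg.2 ht)]
  constructor <;> rintro ⟨h1, h2⟩ <;> constructor <;> linarith

theorem weighted_carleman {ω ω₁ ω₂ : ℝ → ℝ} {a b as at' bs bst : ℝ × ℝ → ℝ} {τ : ℝ} (hτ : 0 ≤ τ)
    (hω : ∀ z, HasDerivAt ω (ω₁ z) z) (hω₁ : ∀ z, HasDerivAt ω₁ (ω₂ z) z) (cω₂ : Continuous ω₂)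
    (ω_zero : ∀ z ≤ 0, ω z = 0)
    (ca : Continuous a) (cb : Continuous b) (cas : Continuous as) (cat : Continuous at')
    (cbs : Continuous bs) (cbst : Continuous bst)
    (has : ∀ s t, HasDerivAt (fun s' => a (s', t)) (as (s, t)) s)
    (hat : ∀ s t, HasDerivAt (fun t' => a (s, t')) (at' (s, t)) t)
    (hbs : ∀ s t, HasDerivAt (fun s' => b (s', t)) (bs (s, t)) s)
    (hbt : ∀ s t, HasDerivAt (fun t' => b (s, t')) (as (s, t)) t)
    (hbst : ∀ s t, HasDerivAt (fun t' => bs (s, t')) (bst (s, t)) t)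
    (hass : ∀ s t, HasDerivAt (fun s' => as (s', t)) (bst (s, t)) s)
    (a0 : ∀ s ∈ Ioo (0 : ℝ) 2, a (s, 0) = 0) (b0 : ∀ s, b (s, 0) = 0)
    {F : ℝ × ℝ → ℝ} (cF : Continuous F)
    (hF : ∀ s ∈ Icc (0 : ℝ) 2, ∀ t ∈ Icc (0 : ℝ) 1, 0 < triangleWeight (s, t) →
      at' (s, t) + bs (s, t) / 3 = F (s, t)) :
    8 * τ / 3 * rectIntegral (fun q => (ω (triangleWeight q) * a q) ^ 2) ≤
      rectIntegral (fun q => 2 * (ω (triangleWeight q) * F q) ^ 2 +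
        (ω₁ (triangleWeight q) - τ * ω (triangleWeight q)) ^ 2 *
          (8 * ((1 - q.2) * a q + (q.1 - 1) * b q / 3) ^ 2 +
            4 / 3 * ((1 - q.2) * b q - (q.1 - 1) * a q) ^ 2)) := by
  have cφ := continuous_triangleWeight
  have cω : Continuous ω := continuous_iff_continuousAt.2 fun z => (hω z).continuousAt
  have cω₁ : Continuous ω₁ := continuous_iff_continuousAt.2 fun z => (hω₁ z).continuousAt
  have dφs (s t : ℝ) : HasDerivAt (fun s' => ω (triangleWeight (s', t)))
      (ω₁ (triangleWeight (s, t)) * (-2 * (s - 1))) s :=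
    (hω _).comp s (hasDerivAt_triangleWeight_fst s t)
  have dφt (s t : ℝ) : HasDerivAt (fun t' => ω (triangleWeight (s, t')))
      (ω₁ (triangleWeight (s, t)) * (-2 * (1 - t))) t :=
    (hω _).comp t (hasDerivAt_triangleWeight_snd s t)
  have dφs₁ (s t : ℝ) : HasDerivAt (fun s' => ω₁ (triangleWeight (s', t)))
      (ω₂ (triangleWeight (s, t)) * (-2 * (s - 1))) s :=
    (hω₁ _).comp s (hasDerivAt_triangleWeight_fst s t)
  have dφt₁ (s t : ℝ) : HasDerivAt (fun t' => ω₁ (triangleWeight (s, t')))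
      (ω₂ (triangleWeight (s, t)) * (-2 * (1 - t))) t :=
    (hω₁ _).comp t (hasDerivAt_triangleWeight_snd s t)
  have hside {s t : ℝ} (hs : s = 0 ∨ s = 2) (ht : t ∈ Icc (0 : ℝ) 1) (x : ℝ) :
      ω (triangleWeight (s, t)) * x = 0 := by
    rw [ω_zero _ (triangleWeight_nonpos_left hs ht), zero_mul]
  have htop (s x : ℝ) : ω (triangleWeight (s, 1)) * x = 0 := by
    rw [ω_zero _ (triangleWeight_nonpos_top s), zero_mul]
  have hbot {s : ℝ} (hs : s ∈ Icc (0 : ℝ) 2) : ω (triangleWeight (s, 0)) * a (s, 0) = 0 := by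
    by_cases h : s ∈ Ioo (0 : ℝ) 2
    · rw [a0 s h, mul_zero]
    · refine hside ?_ (by simp) _
      by_contra! hne
      exact h ⟨lt_of_le_of_ne hs.1 hne.1.symm, lt_of_le_of_ne hs.2 hne.2⟩
  have key := carleman_inequality τ
    (u := fun q => ω (triangleWeight q) * a q) (v := fun q => ω (triangleWeight q) * b q)
    (us := fun q => ω₁ (triangleWeight q) * (-2 * (q.1 - 1)) * a q + ω (triangleWeight q) * as q)
    (ut := fun q => ω₁ (triangleWeight q) * (-2 * (1 - q.2)) * a q + ω (triangleWeight q) * at' q)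
    (vs := fun q => ω₁ (triangleWeight q) * (-2 * (q.1 - 1)) * b q + ω (triangleWeight q) * bs q)
    (vt := fun q => ω₁ (triangleWeight q) * (-2 * (1 - q.2)) * b q + ω (triangleWeight q) * as q)
    (vst := fun q => ω₂ (triangleWeight q) * (-2 * (1 - q.2)) * (-2 * (q.1 - 1)) * b q +
      ω₁ (triangleWeight q) * (-2 * (q.1 - 1)) * as q +
      (ω₁ (triangleWeight q) * (-2 * (1 - q.2)) * bs q + ω (triangleWeight q) * bst q))
    (by fun_prop) (by fun_prop) (by fun_prop) (by fun_prop) (by fun_prop) (by fun_prop)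
    (by fun_prop) (fun s t => (dφs s t).mul (has s t)) (fun s t => (dφt s t).mul (hat s t))
    (fun s t => (dφs s t).mul (hbs s t)) (fun s t => (dφt s t).mul (hbt s t))
    (fun s t => (((dφt₁ s t).mul_const (-2 * (s - 1))).mul (hbt s t)).add
      ((dφt s t).mul (hbst s t)))
    (fun s t => ((((dφs₁ s t).mul_const (-2 * (1 - t))).mul (hbs s t)).add
      ((dφs s t).mul (hass s t))).congr_deriv (by ring))
    (fun s hs => hbot hs) (fun s _ => htop s _) (fun s _ => by simp [b0]) (fun s _ => htop s _)
    (fun t ht => hside (.inl rfl) ht _) (fun t ht => hside (.inr rfl) ht _)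
    (fun t ht => hside (.inl rfl) ht _) (fun t ht => hside (.inr rfl) ht _)
  have hlow : rectIntegral (fun q => (ω (triangleWeight q) * a q) ^ 2) ≤
      rectIntegral (fun q => (ω (triangleWeight q) * a q) ^ 2 +
        (ω (triangleWeight q) * b q) ^ 2 / 3) :=
    rectIntegral_mono (by fun_prop) (by fun_prop) fun s _ t _ => by
      have := sq_nonneg (ω (triangleWeight (s, t)) * b (s, t))
      linarith
  refine ((mul_le_mul_of_nonneg_left hlow (by positivity)).trans key).trans
    (rectIntegral_mono (by fun_prop) (by fun_prop) fun s hs t ht => ?_)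
  have hωF : ω (triangleWeight (s, t)) * (at' (s, t) + bs (s, t) / 3) =
      ω (triangleWeight (s, t)) * F (s, t) := by
    by_cases hpos : 0 < triangleWeight (s, t)
    · rw [hF s hs t ht hpos]
    · rw [ω_zero _ (not_lt.1 hpos), zero_mul, zero_mul]
  have e1 : ω₁ (triangleWeight (s, t)) * (-2 * (1 - t)) * a (s, t) +
      ω (triangleWeight (s, t)) * at' (s, t) +
      2 * τ * (1 - t) * (ω (triangleWeight (s, t)) * a (s, t)) +
      (ω₁ (triangleWeight (s, t)) * (-2 * (s - 1)) * b (s, t) +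
      ω (triangleWeight (s, t)) * bs (s, t) +
      2 * τ * (s - 1) * (ω (triangleWeight (s, t)) * b (s, t))) / 3 =
      ω (triangleWeight (s, t)) * F (s, t) -
      2 * (ω₁ (triangleWeight (s, t)) - τ * ω (triangleWeight (s, t))) *
        ((1 - t) * a (s, t) + (s - 1) * b (s, t) / 3) := by
    rw [← hωF]
    ring
  simp only
  rw [e1]
  have := sq_nonneg (ω (triangleWeight (s, t)) * F (s, t) +
      2 * (ω₁ (triangleWeight (s, t)) - τ * ω (triangleWeight (s, t))) *
        ((1 - t) * a (s, t) + (s - 1) * b (s, t) / 3))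
  linear_combination this

theorem exists_cutoff {c : ℝ} (hc : 0 < c) : ∃ χ : ℝ → ℝ, ∃ K : ℝ, ContDiff ℝ 2 χ ∧ Monotone χ ∧
    (∀ z, 0 ≤ χ z) ∧ (∀ z ≤ c, χ z = 0) ∧ (∀ z, 2 * c ≤ z → χ z = 1) ∧
    (∀ z, |deriv χ z| ≤ K) ∧ ∀ z, 2 * c < z → deriv χ z = 0 := by
  have hcd : ContDiff ℝ 2 fun z : ℝ => Real.smoothTransition (z / c - 1) :=
    (Real.smoothTransition.contDiff (n := 2)).comp (by fun_prop)
  have hlo (z : ℝ) (hz : z ≤ c) : Real.smoothTransition (z / c - 1) = 0 :=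
    Real.smoothTransition.zero_of_nonpos (by rw [sub_nonpos, div_le_one hc]; exact hz)
  have hhi (z : ℝ) (hz : 2 * c ≤ z) : Real.smoothTransition (z / c - 1) = 1 :=
    Real.smoothTransition.one_of_one_le (by rw [le_sub_iff_add_le, le_div_iff₀ hc]; linarith)
  have dlo (z : ℝ) (hz : z < c) :
      deriv (fun z : ℝ => Real.smoothTransition (z / c - 1)) z = 0 := by
    rw [EventuallyEq.deriv_eq (f := fun _ => (0 : ℝ)), deriv_const]
    filter_upwards [Iio_mem_nhds hz] with y hy using hlo y (le_of_lt hy)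
  have dhi (z : ℝ) (hz : 2 * c < z) :
      deriv (fun z : ℝ => Real.smoothTransition (z / c - 1)) z = 0 := by
    rw [EventuallyEq.deriv_eq (f := fun _ => (1 : ℝ)), deriv_const]
    filter_upwards [Ioi_mem_nhds hz] with y hy using hhi y (le_of_lt hy)
  obtain ⟨K, hK⟩ := (isCompact_Icc (a := c) (b := 2 * c)).exists_bound_of_continuousOn
    (hcd.continuous_deriv (by norm_num)).continuousOn
  have hK0 : 0 ≤ K := (norm_nonneg _).trans (hK c ⟨le_rfl, by linarith⟩)
  refine ⟨_, K, hcd, fun x y hxy => Real.smoothTransition.monotone (by gcongr),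
    fun z => Real.smoothTransition.nonneg _, hlo, hhi, fun z => ?_, dhi⟩
  by_cases h1 : z < c
  · rw [dlo z h1, abs_zero]
    exact hK0
  by_cases h2 : 2 * c < z
  · rw [dhi z h2, abs_zero]
    exact hK0
  exact hK z ⟨not_lt.1 h1, not_lt.1 h2⟩

/-! ### Unique continuation in the triangle -/

theorem sq_mul_integral_le {W h : ℝ → ℝ} (hW : Continuous W) (hh : Continuous h) {a b A B w : ℝ}
    (hab : a ≤ b) (hba : b - a ≤ 1) (hA : A ≤ a) (hB : b ≤ B) (hw : 0 ≤ w)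
    (hwW : ∀ x ∈ Icc a b, w ≤ W x) :
    (w * ∫ x in a..b, h x) ^ 2 ≤ ∫ x in A..B, (W x * h x) ^ 2 := by
  calc (w * ∫ x in a..b, h x) ^ 2 = (∫ x in a..b, w * h x) ^ 2 := by
        rw [intervalIntegral.integral_const_mul]
    _ ≤ (b - a) * ∫ x in a..b, (w * h x) ^ 2 := sq_integral_le (by fun_prop) hab
    _ ≤ 1 * ∫ x in a..b, (w * h x) ^ 2 := by
        gcongr
        exact intervalIntegral.integral_nonneg hab fun _ _ => sq_nonneg _
    _ = ∫ x in a..b, (w * h x) ^ 2 := one_mul _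
    _ ≤ ∫ x in a..b, (W x * h x) ^ 2 := by
        refine intervalIntegral.integral_mono_on hab
          (Continuous.intervalIntegrable (by fun_prop) _ _)
          (Continuous.intervalIntegrable (by fun_prop) _ _) fun x hx => ?_
        rw [mul_pow, mul_pow]
        have := hwW x hx
        gcongr
    _ ≤ ∫ x in A..B, (W x * h x) ^ 2 :=
        intervalIntegral.integral_mono_interval hA hab hB (ae_of_all _ fun _ => sq_nonneg _)
          (Continuous.intervalIntegrable (by fun_prop) _ _)

theorem continuous_primitive_snd {h : ℝ × ℝ → ℝ} (hh : Continuous h) (a : ℝ) :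
    Continuous fun q : ℝ × ℝ => ∫ t in a..q.2, h (q.1, t) :=
  intervalIntegral.continuous_parametric_primitive_of_continuous (f := fun s t => h (s, t))
    (by simpa [uncurry_def] using hh)

theorem continuous_primitive_fst {h : ℝ × ℝ → ℝ} (hh : Continuous h) (a : ℝ) :
    Continuous fun q : ℝ × ℝ => ∫ s in a..q.1, h (s, q.2) :=
  (continuous_primitive_snd (hh.comp continuous_swap) a).comp continuous_swap

section weights

variable {W h : ℝ × ℝ → ℝ}

theorem rectIntegral_primitive_snd_le (hW : Continuous W) (hh : Continuous h) (W0 : ∀ q, 0 ≤ W q)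
    (hanti : ∀ s t t', t' ∈ Icc 0 t → t ≤ 1 → W (s, t) ≤ W (s, t')) :
    rectIntegral (fun q => (W q * ∫ t in (0 : ℝ)..q.2, h (q.1, t)) ^ 2) ≤
      rectIntegral fun q => (W q * h q) ^ 2 := by
  have hp := continuous_primitive_snd hh 0
  have hg : Continuous fun q : ℝ × ℝ => ∫ t in (0 : ℝ)..1, (W (q.1, t) * h (q.1, t)) ^ 2 :=
    (continuous_inner_integral (f := fun q => (W q * h q) ^ 2) (by fun_prop) 0 1).comp
      continuous_fst
  refine (rectIntegral_mono (by fun_prop) hg fun s hs t ht => ?_).trans ?_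
  · exact sq_mul_integral_le (W := fun t => W (s, t)) (h := fun t => h (s, t)) (by fun_prop)
      (by fun_prop) ht.1 (by linarith [ht.2]) le_rfl ht.2 (W0 _)
      fun x hx => hanti s t x hx ht.2
  · simp [rectIntegral]

theorem rectIntegral_primitive_fst_le (hW : Continuous W) (hh : Continuous h) (W0 : ∀ q, 0 ≤ W q)
    (hanti : ∀ s t σ, σ ∈ uIcc 1 s → W (s, t) ≤ W (σ, t)) :
    rectIntegral (fun q => (W q * ∫ s in (1 : ℝ)..q.1, h (s, q.2)) ^ 2) ≤
      2 * rectIntegral fun q => (W q * h q) ^ 2 := by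
  have hp := continuous_primitive_fst hh 1
  have hc : Continuous fun q => (W q * h q) ^ 2 := by fun_prop
  have hg : Continuous fun q : ℝ × ℝ => ∫ s in (0 : ℝ)..2, (W (s, q.2) * h (s, q.2)) ^ 2 :=
    (continuous_inner_integral (hc.comp continuous_swap) 0 2).comp continuous_snd
  refine (rectIntegral_mono (by fun_prop) hg fun s hs t ht => ?_).trans ?_
  · simp only
    rcases le_total 1 s with h1 | h1
    · refine sq_mul_integral_le (W := fun s => W (s, t)) (h := fun s => h (s, t)) (by fun_prop)
        (by fun_prop) h1 (by linarith [hs.2]) (by norm_num) hs.2 (W0 _) fun x hx => ?_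
      exact hanti s t x (by rwa [uIcc_of_le h1])
    · rw [intervalIntegral.integral_symm, mul_neg, neg_sq]
      refine sq_mul_integral_le (W := fun s => W (s, t)) (h := fun s => h (s, t)) (by fun_prop)
        (by fun_prop) h1 (by linarith [hs.1]) hs.1 (by norm_num) (W0 _) fun x hx => ?_
      exact hanti s t x (by rwa [uIcc_of_ge h1])
  · rw [rectIntegral_swap hc]
    simp [rectIntegral]

theorem rectIntegral_volterra_le (hW : Continuous W) (hh : Continuous h) (W0 : ∀ q, 0 ≤ W q)
    (hanti₁ : ∀ s t σ, σ ∈ uIcc 1 s → W (s, t) ≤ W (σ, t))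
    (hanti₂ : ∀ s t t', t' ∈ Icc 0 t → t ≤ 1 → W (s, t) ≤ W (s, t')) (k : ℝ) :
    rectIntegral (fun q => (W q * ∫ t in (0 : ℝ)..q.2,
        (k * (∫ s in (1 : ℝ)..q.1, h (s, t)) - h (q.1, t) / 3)) ^ 2) ≤
      (4 * k ^ 2 + 2 / 9) * rectIntegral fun q => (W q * h q) ^ 2 := by
  have hp := continuous_primitive_fst hh 1
  have h1 := rectIntegral_primitive_snd_le hW
    (h := fun q => k * (∫ s in (1 : ℝ)..q.1, h (s, q.2)) - h q / 3) (by fun_prop) W0 hanti₂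
  have h2 := rectIntegral_primitive_fst_le hW hh W0 hanti₁
  have h3 : rectIntegral (fun q => (W q * (k * (∫ s in (1 : ℝ)..q.1, h (s, q.2)) - h q / 3)) ^ 2) ≤
      rectIntegral (fun q => 2 * k ^ 2 * (W q * ∫ s in (1 : ℝ)..q.1, h (s, q.2)) ^ 2 +
        2 / 9 * (W q * h q) ^ 2) := by
    refine rectIntegral_mono (by fun_prop) (by fun_prop) fun s _ t _ => ?_
    have := sq_nonneg (W (s, t) * (k * (∫ s in (1 : ℝ)..s, h (s, t))) + W (s, t) * h (s, t) / 3)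
    linear_combination this
  rw [rectIntegral_add (by fun_prop) (by fun_prop), rectIntegral_const_mul,
    rectIntegral_const_mul] at h3
  have h4 := mul_le_mul_of_nonneg_left h2 (by positivity : 0 ≤ 2 * k ^ 2)
  linarith

end weights

theorem triangleWeight_le_of_mem_uIcc {s t σ : ℝ} (hσ : σ ∈ uIcc 1 s) :
    triangleWeight (s, t) ≤ triangleWeight (σ, t) := by
  simp only [triangleWeight]
  rcases le_total 1 s with h | h
  · rw [uIcc_of_le h] at hσ
    nlinarith [hσ.1, hσ.2]
  · rw [uIcc_of_ge h] at hσ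
    nlinarith [hσ.1, hσ.2]

theorem triangleWeight_le_of_mem_Icc {s t t' : ℝ} (ht' : t' ∈ Icc 0 t) (ht : t ≤ 1) :
    triangleWeight (s, t) ≤ triangleWeight (s, t') := by
  simp only [triangleWeight]
  nlinarith [ht'.1, ht'.2]

theorem carleman_estimate {χ : ℝ → ℝ} {c K k : ℝ} (hc : 0 < c) (hχ : ContDiff ℝ 2 χ)
    (χmono : Monotone χ) (χ0 : ∀ z, 0 ≤ χ z) (χlo : ∀ z ≤ c, χ z = 0) (hK : ∀ z, |deriv χ z| ≤ K)
    (dχ : ∀ z, 2 * c < z → deriv χ z = 0)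
    {a b as at' bs bst : ℝ × ℝ → ℝ}
    (ca : Continuous a) (cb : Continuous b) (cas : Continuous as) (cat : Continuous at')
    (cbs : Continuous bs) (cbst : Continuous bst)
    (has : ∀ s t, HasDerivAt (fun s' => a (s', t)) (as (s, t)) s)
    (hat : ∀ s t, HasDerivAt (fun t' => a (s, t')) (at' (s, t)) t)
    (hbs : ∀ s t, HasDerivAt (fun s' => b (s', t)) (bs (s, t)) s)
    (hbt : ∀ s t, HasDerivAt (fun t' => b (s, t')) (as (s, t)) t)
    (hbst : ∀ s t, HasDerivAt (fun t' => bs (s, t')) (bst (s, t)) t)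
    (hass : ∀ s t, HasDerivAt (fun s' => as (s', t)) (bst (s, t)) s)
    (a0 : ∀ s ∈ Ioo (0 : ℝ) 2, a (s, 0) = 0) (b0 : ∀ s, b (s, 0) = 0)
    (hF : ∀ s ∈ Icc (0 : ℝ) 2, ∀ t ∈ Icc (0 : ℝ) 1, 0 < triangleWeight (s, t) →
      at' (s, t) + bs (s, t) / 3 =
        ∫ t' in (0 : ℝ)..t, (k * (∫ s' in (1 : ℝ)..s, a (s', t')) - a (s, t') / 3)) :
    ∃ D : ℝ, ∃ τ₀ ≥ 0, ∀ τ ≥ τ₀,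
      rectIntegral (fun q => (Real.exp (τ * triangleWeight q) * χ (triangleWeight q) * a q) ^ 2) ≤
        Real.exp (4 * τ * c) * D := by
  set D := rectIntegral fun q : ℝ × ℝ => 8 * ((1 - q.2) * a q + (q.1 - 1) * b q / 3) ^ 2 +
            4 / 3 * ((1 - q.2) * b q - (q.1 - 1) * a q) ^ 2 with hD
  refine ⟨K ^ 2 * D, 3 / 8 * (2 * (4 * k ^ 2 + 2 / 9) + 1), by positivity, fun τ hτ => ?_⟩
  have hτ0 : 0 ≤ τ := le_trans (by positivity) hτ
  have dχ₁ (z : ℝ) : HasDerivAt χ (deriv χ z) z :=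
    (hχ.differentiable (by norm_num) z).hasDerivAt
  have hχ' : ContDiff ℝ 1 (deriv χ) := ContDiff.deriv' hχ
  have dχ₂ (z : ℝ) : HasDerivAt (deriv χ) (deriv (deriv χ) z) z :=
    (hχ'.differentiable (by norm_num) z).hasDerivAt
  have cχ₂ : Continuous (deriv (deriv χ)) := hχ'.continuous_deriv (by norm_num)
  have cχ₁ := hχ'.continuous
  have cχ := hχ.continuous
  have cφ := continuous_triangleWeight
  have dexp (z : ℝ) : HasDerivAt (fun z => Real.exp (τ * z)) (τ * Real.exp (τ * z)) z := by
    simpa [mul_comm] using ((hasDerivAt_id z).const_mul τ).exp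
  have cY := continuous_primitive_fst ca 1
  have cF := continuous_primitive_snd
    (h := fun q => k * (∫ s' in (1 : ℝ)..q.1, a (s', q.2)) - a q / 3) (by fun_prop) 0
  have key := weighted_carleman (ω := fun z => Real.exp (τ * z) * χ z)
    (ω₁ := fun z => τ * Real.exp (τ * z) * χ z + Real.exp (τ * z) * deriv χ z)
    (ω₂ := fun z => (τ * (τ * Real.exp (τ * z)) * χ z + τ * Real.exp (τ * z) * deriv χ z) +
      (τ * Real.exp (τ * z) * deriv χ z + Real.exp (τ * z) * deriv (deriv χ) z)) hτ0
    (fun z => (dexp z).mul (dχ₁ z))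
    (fun z => (((dexp z).const_mul τ).mul (dχ₁ z)).add ((dexp z).mul (dχ₂ z))) (by fun_prop)
    (fun z hz => by simp [χlo z (by linarith)]) ca cb cas cat cbs cbst has hat hbs hbt hbst hass
    a0 b0 cF hF
  have hvol := rectIntegral_volterra_le
    (W := fun q => Real.exp (τ * triangleWeight q) * χ (triangleWeight q)) (by fun_prop) ca
    (fun q => mul_nonneg (Real.exp_nonneg _) (χ0 _))
    (fun s t σ hσ => by
      have := triangleWeight_le_of_mem_uIcc (t := t) hσ
      have h2 := χmono this
      have h3 := χ0 (triangleWeight (s, t))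
      gcongr)
    (fun s t t' ht' ht => by
      have := triangleWeight_le_of_mem_Icc (s := s) ht' ht
      have h2 := χmono this
      have h3 := χ0 (triangleWeight (s, t))
      gcongr) k
  have hrem (z : ℝ) : (τ * Real.exp (τ * z) * χ z + Real.exp (τ * z) * deriv χ z -
      τ * (Real.exp (τ * z) * χ z)) ^ 2 ≤ Real.exp (4 * τ * c) * K ^ 2 := by
    have e : (τ * Real.exp (τ * z) * χ z + Real.exp (τ * z) * deriv χ z -
      τ * (Real.exp (τ * z) * χ z)) ^ 2 = Real.exp (2 * τ * z) * deriv χ z ^ 2 := by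
      have : Real.exp (2 * τ * z) = Real.exp (τ * z) ^ 2 := by
        rw [← Real.exp_nat_mul]
        ring_nf
      rw [this]
      ring
    rw [e]
    by_cases hz : 2 * c < z
    · rw [dχ z hz]
      simp only [ne_eq, OfNat.ofNat_ne_zero, not_false_eq_true, zero_pow, mul_zero]
      positivity
    · have h1 : deriv χ z ^ 2 ≤ K ^ 2 := sq_le_sq' (by linarith [neg_le_of_abs_le (hK z)])
        (le_of_abs_le (hK z))
      have h2 : Real.exp (2 * τ * z) ≤ Real.exp (4 * τ * c) :=
        Real.exp_le_exp.2 (by nlinarith [not_lt.1 hz])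
      gcongr
  have hup : rectIntegral (fun q => 2 * (Real.exp (τ * triangleWeight q) * χ (triangleWeight q) *
        ∫ t' in (0 : ℝ)..q.2, (k * (∫ s' in (1 : ℝ)..q.1, a (s', t')) - a (q.1, t') / 3)) ^ 2 +
        (τ * Real.exp (τ * triangleWeight q) * χ (triangleWeight q) +
          Real.exp (τ * triangleWeight q) * deriv χ (triangleWeight q) -
          τ * (Real.exp (τ * triangleWeight q) * χ (triangleWeight q))) ^ 2 *
          (8 * ((1 - q.2) * a q + (q.1 - 1) * b q / 3) ^ 2 +
            4 / 3 * ((1 - q.2) * b q - (q.1 - 1) * a q) ^ 2)) ≤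
      rectIntegral (fun q => 2 * (Real.exp (τ * triangleWeight q) * χ (triangleWeight q) *
        ∫ t' in (0 : ℝ)..q.2, (k * (∫ s' in (1 : ℝ)..q.1, a (s', t')) - a (q.1, t') / 3)) ^ 2 +
        Real.exp (4 * τ * c) * K ^ 2 *
          (8 * ((1 - q.2) * a q + (q.1 - 1) * b q / 3) ^ 2 +
            4 / 3 * ((1 - q.2) * b q - (q.1 - 1) * a q) ^ 2)) := by
    refine rectIntegral_mono (by fun_prop) (by fun_prop) fun s _ t _ => ?_
    have := hrem (triangleWeight (s, t))
    simp only
    gcongr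
  have h5 := key.trans hup
  rw [rectIntegral_add (by fun_prop) (by fun_prop), rectIntegral_const_mul,
    rectIntegral_const_mul, ← hD] at h5
  have hpos : 0 ≤ rectIntegral
      (fun q => (Real.exp (τ * triangleWeight q) * χ (triangleWeight q) * a q) ^ 2) :=
    rectIntegral_nonneg fun q => sq_nonneg _
  nlinarith [mul_le_mul_of_nonneg_right hτ hpos]

theorem unique_continuation {H : ℝ → ℝ → ℝ} (hH : ContDiff ℝ 2 (uncurry H)) (k : ℝ)
    (heq : ∀ s t, 0 ≤ t → t < s → s < 2 - t → pdy (pdy H) s t + pdx (pdx H) s t / 3 =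
      k * (∫ σ in (1 : ℝ)..s, H σ t) - H s t / 3)
    (h0 : ∀ s ∈ Ioo (0 : ℝ) 2, H s 0 = 0) (h1 : ∀ s ∈ Ioo (0 : ℝ) 2, pdy H s 0 = 0)
    {s t : ℝ} (ht : 0 ≤ t) (hts : t < s) (hst : s < 2 - t) : H s t = 0 := by
  have hH1 : ContDiff ℝ 1 (uncurry H) := hH.of_le one_le_two
  have hx : ContDiff ℝ 1 (uncurry (pdx H)) := contDiff_pdx (n := 1) hH
  have hy : ContDiff ℝ 1 (uncurry (pdy H)) := contDiff_pdy (n := 1) hH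
  have hxx : Continuous (uncurry (pdx (pdx H))) := (contDiff_pdx (n := 0) hx).continuous
  have hyy : Continuous (uncurry (pdy (pdy H))) := (contDiff_pdy (n := 0) hy).continuous
  have cH := hH.continuous
  have cx := hx.continuous
  have cy := hy.continuous
  have cb := continuous_primitive_snd cx 0
  have cbs := continuous_primitive_snd hxx 0
  set z₀ := triangleWeight (s, t) with hz₀
  have hz₀pos : 0 < z₀ := (triangleWeight_pos_iff (by linarith)).2 ⟨hts, hst⟩
  set c := z₀ / 8 with hc
  have hcpos : 0 < c := by positivity
  obtain ⟨χ, K, hχ, χmono, χ0, χlo, χhi, hK, dχ⟩ := exists_cutoff hcpos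
  obtain ⟨D, τ₀, hτ₀, hD⟩ := carleman_estimate (k := k) hcpos hχ χmono χ0 χlo hK dχ
    cH cb cx cy cbs hxx
    (fun s t => hasDerivAt_pdx hH1 s t) (fun s t => hasDerivAt_pdy hH1 s t)
    (fun s t => hasDerivAt_intervalIntegral_of_continuous cx hxx
      (fun s t => hasDerivAt_pdx hx s t) 0 t s)
    (fun s t => (Continuous.integral_hasStrictDerivAt (f := fun t => uncurry (pdx H) (s, t))
      (by fun_prop) 0 t).hasDerivAt)
    (fun s t => (Continuous.integral_hasStrictDerivAt
      (f := fun t => uncurry (pdx (pdx H)) (s, t)) (by fun_prop) 0 t).hasDerivAt)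
    (fun s t => hasDerivAt_pdx hx s t) h0 (fun s => by simp)
    (fun s hs t ht hpos => by
      obtain ⟨hts, hst⟩ := (triangleWeight_pos_iff ht.2).1 hpos
      have hI : ∫ t' in (0 : ℝ)..t, pdy (pdy H) s t' = pdy H s t - pdy H s 0 :=
        intervalIntegral.integral_eq_sub_of_hasDerivAt (fun t' _ => hasDerivAt_pdy hy s t')
          (Continuous.intervalIntegrable (hyy.comp (Continuous.prodMk_right s)) _ _)
      rw [h1 s ⟨by linarith [ht.1], by linarith [ht.1]⟩, sub_zero] at hI
      simp only [uncurry_apply_pair]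
      have cyy : Continuous fun t' => pdy (pdy H) s t' := hyy.comp (Continuous.prodMk_right s)
      have cxx : Continuous fun t' => pdx (pdx H) s t' := hxx.comp (Continuous.prodMk_right s)
      rw [← hI, ← intervalIntegral.integral_div, ← intervalIntegral.integral_add
        (cyy.intervalIntegrable _ _) ((cxx.div_const 3).intervalIntegrable _ _)]
      refine intervalIntegral.integral_congr fun t' ht' => ?_
      rw [uIcc_of_le ht.1] at ht'
      exact heq s t' ht'.1 (by linarith [ht'.2]) (by linarith [ht'.2]))
  set m : ℝ × ℝ → ℝ := fun q =>
    min 1 (max 0 (triangleWeight q - z₀ / 2)) * uncurry H q ^ 2 with hm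
  have cφ := continuous_triangleWeight
  have cm : Continuous m := by fun_prop
  have hbound : ∀ τ ≥ τ₀, rectIntegral m ≤ Real.exp (-(4 * c * τ)) * D := by
    intro τ hτ
    have hτ0 : 0 ≤ τ := hτ₀.le.trans hτ
    have hχc := hχ.continuous
    have h2 : rectIntegral (fun q => Real.exp (8 * c * τ) * m q) ≤ rectIntegral (fun q =>
        (Real.exp (τ * triangleWeight q) * χ (triangleWeight q) * uncurry H q) ^ 2) := by
      refine rectIntegral_mono (by fun_prop) (by fun_prop) fun s _ t _ => ?_
      simp only [hm]
      by_cases hz : triangleWeight (s, t) ≤ z₀ / 2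
      · rw [max_eq_left (by linarith)]
        simp only [zero_le_one, inf_of_le_right, zero_mul, mul_zero]
        positivity
      · rw [χhi _ (by linarith [not_le.1 hz]), mul_one, mul_pow, ← Real.exp_nat_mul, ← mul_assoc]
        gcongr
        refine (mul_le_of_le_one_right (Real.exp_nonneg _) (min_le_left _ _)).trans
          (Real.exp_le_exp.2 ?_)
        push_cast
        nlinarith [not_le.1 hz]
    rw [rectIntegral_const_mul] at h2
    have h3 := h2.trans (hD τ hτ)
    have e : Real.exp (-(4 * c * τ)) * D =
        Real.exp (-(8 * c * τ)) * (Real.exp (4 * τ * c) * D) := by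
      rw [← mul_assoc, ← Real.exp_add]
      ring_nf
    rw [e]
    calc rectIntegral m = Real.exp (-(8 * c * τ)) * (Real.exp (8 * c * τ) * rectIntegral m) := by
          rw [← mul_assoc, ← Real.exp_add]
          simp
      _ ≤ _ := by gcongr
  have hlim : Tendsto (fun τ => Real.exp (-(4 * c * τ)) * D) atTop (𝓝 (0 * D)) := by
    refine Tendsto.mul_const D (Real.tendsto_exp_neg_atTop_nhds_zero.comp ?_)
    exact tendsto_id.const_mul_atTop (by positivity)
  rw [zero_mul] at hlim
  have hle : rectIntegral m ≤ 0 :=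
    ge_of_tendsto hlim (eventually_atTop.2 ⟨τ₀, hbound⟩)
  have hzero := eq_zero_of_rectIntegral_nonpos cm
    (fun q => mul_nonneg (le_min zero_le_one (le_max_left _ _)) (sq_nonneg _)) hle
    (s := s) (t := t) ⟨by linarith, by linarith⟩ ⟨ht, by linarith⟩
  have hmpos : 0 < min 1 (max 0 (triangleWeight (s, t) - z₀ / 2)) := by
    rw [← hz₀]
    exact lt_min one_pos (lt_max_of_lt_right (by linarith))
  simpa using (mul_eq_zero.1 hzero).resolve_left hmpos.ne'

/-! ### Linear combinations and rotation of coordinates -/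

theorem pdx_add_mul {f g : ℝ → ℝ → ℝ} (hf : ContDiff ℝ 1 (uncurry f))
    (hg : ContDiff ℝ 1 (uncurry g)) (α β : ℝ) :
    pdx (fun x y => α * f x y + β * g x y) = fun x y => α * pdx f x y + β * pdx g x y :=
  funext₂ fun x y =>
    (((hasDerivAt_pdx hf x y).const_mul α).add ((hasDerivAt_pdx hg x y).const_mul β)).deriv

theorem pdy_add_mul {f g : ℝ → ℝ → ℝ} (hf : ContDiff ℝ 1 (uncurry f))
    (hg : ContDiff ℝ 1 (uncurry g)) (α β : ℝ) :
    pdy (fun x y => α * f x y + β * g x y) = fun x y => α * pdy f x y + β * pdy g x y :=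
  funext₂ fun x y =>
    (((hasDerivAt_pdy hf x y).const_mul α).add ((hasDerivAt_pdy hg x y).const_mul β)).deriv

theorem contDiff_add_mul {f g : ℝ → ℝ → ℝ} {n : ℕ} (hf : ContDiff ℝ n (uncurry f))
    (hg : ContDiff ℝ n (uncurry g)) (α β : ℝ) :
    ContDiff ℝ n (uncurry fun x y => α * f x y + β * g x y) :=
  (contDiff_const.mul hf).add (contDiff_const.mul hg)

/-- The directional derivative `α ∂ₓ + β ∂ᵧ`. -/
def pdir (α β : ℝ) (f : ℝ → ℝ → ℝ) (x y : ℝ) : ℝ := α * pdx f x y + β * pdy f x y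

theorem contDiff_pdir {f : ℝ → ℝ → ℝ} {n : ℕ} (hf : ContDiff ℝ (n + 1) (uncurry f)) (α β : ℝ) :
    ContDiff ℝ n (uncurry (pdir α β f)) :=
  contDiff_add_mul (contDiff_pdx hf) (contDiff_pdy hf) α β

theorem pdir_add_mul {f g : ℝ → ℝ → ℝ} (hf : ContDiff ℝ 1 (uncurry f))
    (hg : ContDiff ℝ 1 (uncurry g)) (α β γ δ : ℝ) :
    pdir α β (fun x y => γ * f x y + δ * g x y) =
      fun x y => γ * pdir α β f x y + δ * pdir α β g x y := by
  funext x y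
  simp only [pdir, pdx_add_mul hf hg, pdy_add_mul hf hg]
  ring

theorem pdir_pdir_pdir {f : ℝ → ℝ → ℝ} (hf : ContDiff ℝ 3 (uncurry f)) (α β γ δ ε ζ : ℝ)
    (x y : ℝ) :
    pdir α β (pdir γ δ (pdir ε ζ f)) x y =
      α * γ * ε * pdx (pdx (pdx f)) x y +
      (α * γ * ζ + α * δ * ε + β * γ * ε) * pdy (pdx (pdx f)) x y +
      (α * δ * ζ + β * γ * ζ + β * δ * ε) * pdy (pdy (pdx f)) x y +
      β * δ * ζ * pdy (pdy (pdy f)) x y := by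
  have hf2 : ContDiff ℝ 2 (uncurry f) := hf.of_le (by norm_num)
  have hx : ContDiff ℝ 2 (uncurry (pdx f)) := contDiff_pdx (n := 2) hf
  have hy : ContDiff ℝ 2 (uncurry (pdy f)) := contDiff_pdy (n := 2) hf
  have e1 : pdir γ δ (pdir ε ζ f) = fun x y => ε * pdir γ δ (pdx f) x y +
      ζ * pdir γ δ (pdy f) x y :=
    pdir_add_mul (hx.of_le one_le_two) (hy.of_le one_le_two) γ δ ε ζ
  have hpp {g : ℝ → ℝ → ℝ} (hg : ContDiff ℝ 2 (uncurry g)) :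
      pdir α β (pdir γ δ g) = fun x y => γ * pdir α β (pdx g) x y + δ * pdir α β (pdy g) x y :=
    pdir_add_mul (contDiff_pdx (n := 1) hg) (contDiff_pdy (n := 1) hg) α β γ δ
  rw [e1, pdir_add_mul (contDiff_pdir (n := 1) hx γ δ) (contDiff_pdir (n := 1) hy γ δ),
    hpp hx, hpp hy]
  simp only [pdir]
  rw [pdx_pdy_comm hf2, pdx_pdy_comm hx, pdx_pdy_comm hy, pdx_pdy_comm hf2]
  ring

/-- The function `f` in the variables `s = x + y`, `t = y - x`. -/
def rotated (f : ℝ → ℝ → ℝ) (s t : ℝ) : ℝ := f ((s - t) / 2) ((s + t) / 2)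

theorem contDiff_rotated {f : ℝ → ℝ → ℝ} {n : ℕ} (hf : ContDiff ℝ n (uncurry f)) :
    ContDiff ℝ n (uncurry (rotated f)) := by
  have h : ContDiff ℝ n fun q : ℝ × ℝ => ((q.1 - q.2) / 2, (q.1 + q.2) / 2) := by fun_prop
  exact hf.comp h

theorem pdx_rotated {f : ℝ → ℝ → ℝ} (hf : ContDiff ℝ 1 (uncurry f)) :
    pdx (rotated f) = rotated (pdir (1 / 2) (1 / 2) f) :=
  funext₂ fun s t => (hasDerivAt_comp_partials hf
    (((hasDerivAt_id s).sub_const t).div_const 2)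
    (((hasDerivAt_id s).add_const t).div_const 2)).deriv

theorem pdy_rotated {f : ℝ → ℝ → ℝ} (hf : ContDiff ℝ 1 (uncurry f)) :
    pdy (rotated f) = rotated (pdir (-1 / 2) (1 / 2) f) :=
  funext₂ fun s t => (hasDerivAt_comp_partials hf
    (((hasDerivAt_id t).const_sub s).div_const 2)
    (((hasDerivAt_id t).const_add s).div_const 2)).deriv

theorem rotated_eq {f : ℝ → ℝ → ℝ} (hf : ContDiff ℝ 3 (uncurry f)) (s t : ℝ) :
    2 * pdx (pdx (pdx (rotated f))) s t + 6 * pdx (pdy (pdy (rotated f))) s t +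
      2 * pdx (rotated f) s t =
    rotated (fun x y => pdx (pdx (pdx f)) x y + pdy (pdy (pdy f)) x y + pdx f x y + pdy f x y)
      s t := by
  have hf1 : ContDiff ℝ 1 (uncurry f) := hf.of_le (by norm_num)
  have h2 (α β : ℝ) : ContDiff ℝ 2 (uncurry (pdir α β f)) := contDiff_pdir (n := 2) hf α β
  have h1 (α β γ δ : ℝ) : ContDiff ℝ 1 (uncurry (pdir α β (pdir γ δ f))) :=
    contDiff_pdir (n := 1) (h2 γ δ) α β
  rw [pdx_rotated hf1, pdy_rotated hf1, pdx_rotated ((h2 _ _).of_le one_le_two),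
    pdy_rotated ((h2 _ _).of_le one_le_two), pdx_rotated (h1 _ _ _ _), pdx_rotated (h1 _ _ _ _)]
  simp only [rotated, pdir_pdir_pdir hf]
  simp only [pdir]
  ring

/-! ### Volterra convolutions -/

/-- The convolution `∫₀ᵗ K(s - 1, t - τ) g(τ) dτ`. -/
def volterra (K : ℝ → ℝ → ℝ) (g : ℝ → ℝ) (s t : ℝ) : ℝ :=
  ∫ τ in (0 : ℝ)..t, K (s - 1) (t - τ) * g τ

section volterra

variable {K : ℝ → ℝ → ℝ} {g : ℝ → ℝ}

theorem continuous_volterra (hK : Continuous (uncurry K)) (hg : Continuous g) :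
    Continuous (uncurry (volterra K g)) := by
  have h := intervalIntegral.continuous_parametric_primitive_of_continuous (μ := volume)
    (f := fun (q : ℝ × ℝ) τ => uncurry K (q.1 - 1, q.2 - τ) * g τ) (a₀ := 0)
    (by simp only [uncurry_def]; fun_prop)
  exact h.comp (continuous_id.prodMk continuous_snd)

theorem hasDerivAt_volterra_fst (hK : ContDiff ℝ 1 (uncurry K)) (hg : Continuous g) (s t : ℝ) :
    HasDerivAt (fun s' => volterra K g s' t) (volterra (pdx K) g s t) s := by
  have cK := hK.continuous
  have cK' := (contDiff_pdx (n := 0) hK).continuous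
  refine hasDerivAt_intervalIntegral_of_continuous
    (F := fun s τ => uncurry K (s - 1, t - τ) * g τ)
    (F' := fun s τ => uncurry (pdx K) (s - 1, t - τ) * g τ)
    (by simp only [uncurry_def]; fun_prop) (by simp only [uncurry_def]; fun_prop)
    (fun s τ => ?_) 0 t s
  exact ((hasDerivAt_pdx hK (s - 1) (t - τ)).comp_sub_const s 1).mul_const (g τ)

theorem hasDerivAt_volterra_snd (hK : ContDiff ℝ 1 (uncurry K)) (hg : Continuous g) (s t : ℝ) :
    HasDerivAt (fun t' => volterra K g s t')
      (K (s - 1) 0 * g t + volterra (pdy K) g s t) t := by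
  have cK := hK.continuous
  have cK' := (contDiff_pdy (n := 0) hK).continuous
  have h := hasDerivAt_intervalIntegral_right
    (F := fun t τ => uncurry K (s - 1, t - τ) * g τ)
    (F' := fun t τ => uncurry (pdy K) (s - 1, t - τ) * g τ)
    (by simp only [uncurry_def]; fun_prop) (by simp only [uncurry_def]; fun_prop)
    (fun t τ => ((hasDerivAt_pdy hK (s - 1) (t - τ)).comp_sub_const t τ).mul_const (g τ)) 0 t
  simpa only [sub_self] using! h

theorem contDiff_one_volterra (hK : ContDiff ℝ 1 (uncurry K)) (hg : Continuous g) :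
    ContDiff ℝ 1 (uncurry (volterra K g)) := by
  have cK := hK.continuous
  have h := contDiff_succ_of_partials (n := 0) (hasDerivAt_volterra_fst hK hg)
    (hasDerivAt_volterra_snd hK hg)
    (contDiff_zero.2 (continuous_volterra (contDiff_pdx (n := 0) hK).continuous hg))
    (contDiff_zero.2 ?_)
  · simpa using h
  · have h1 := continuous_volterra (contDiff_pdy (n := 0) hK).continuous hg
    have h2 : Continuous fun q : ℝ × ℝ => uncurry K (q.1 - 1, 0) * g q.2 := by fun_prop
    exact h2.add h1

theorem volterra_add_mul {K' : ℝ → ℝ → ℝ} (hK : Continuous (uncurry K))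
    (hK' : Continuous (uncurry K')) (hg : Continuous g) (α β s t : ℝ) :
    volterra (fun s t => α * K s t + β * K' s t) g s t =
      α * volterra K g s t + β * volterra K' g s t := by
  have h {L : ℝ → ℝ → ℝ} (hL : Continuous (uncurry L)) :
      Continuous fun τ => L (s - 1) (t - τ) * g τ :=
    (hL.comp (by fun_prop : Continuous fun τ => (s - 1, t - τ))).mul hg
  have h1 := h hK
  have h2 := h hK'
  simp only [volterra]
  rw [← intervalIntegral.integral_const_mul, ← intervalIntegral.integral_const_mul,
    ← intervalIntegral.integral_add ((h1.const_mul α).intervalIntegrable _ _)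
      ((h2.const_mul β).intervalIntegrable _ _)]
  exact intervalIntegral.integral_congr fun τ _ => by ring

end volterra

theorem eq_zero_of_abs_le_integral {g : ℝ → ℝ} (hg : Continuous g) {C : ℝ}
    (h : ∀ t ∈ Ico (0 : ℝ) 1, |g t| ≤ C * ∫ τ in (0 : ℝ)..t, |g τ|) {t : ℝ}
    (ht : t ∈ Ico (0 : ℝ) 1) : g t = 0 := by
  have hd (t : ℝ) : HasDerivAt (fun t => ∫ τ in (0 : ℝ)..t, |g τ|) |g t| t :=
    (Continuous.integral_hasStrictDerivAt (by fun_prop) 0 t).hasDerivAt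
  have hpos {t : ℝ} (ht : 0 ≤ t) : 0 ≤ ∫ τ in (0 : ℝ)..t, |g τ| :=
    intervalIntegral.integral_nonneg ht fun _ _ => abs_nonneg _
  have hgr := norm_le_gronwallBound_of_norm_deriv_right_le (K := C) (ε := 0) (δ := 0)
    (f := fun t => ∫ τ in (0 : ℝ)..t, |g τ|) (a := 0) (b := 1)
    (fun t _ => (hd t).continuousAt.continuousWithinAt) (fun t _ => (hd t).hasDerivWithinAt)
    (by simp) (fun t ht => by
      rw [Real.norm_of_nonneg (abs_nonneg _), Real.norm_of_nonneg (hpos ht.1), add_zero]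
      exact h t ht) t ⟨ht.1, ht.2.le⟩
  rw [gronwallBound_ε0_δ0, norm_le_zero_iff] at hgr
  have := h t ht
  rw [hgr, mul_zero] at this
  simpa using this

/-! ### Uniqueness -/

section uniqueness

variable {lam : ℝ} {G : ℝ → ℝ → ℝ}

theorem SymbolData.pdx_fundamental_right_zero (S : SymbolData lam) (s : ℝ) :
    pdx S.fundamental s 0 = 0 := by
  have h : (fun s' => S.fundamental s' 0) = fun _ => 0 := funext S.fundamental_right_zero
  rw [pdx, h, deriv_const]

theorem SymbolData.pdy_pdx_fundamental_right_zero (S : SymbolData lam) (s : ℝ) :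
    pdy (pdx S.fundamental) s 0 = lam / 6 := by
  rw [← pdx_pdy_comm (S.contDiff_fundamental 2), pdx]
  have h : (fun s' => pdy S.fundamental s' 0) = fun s' => lam / 6 * s' :=
    funext S.pdy_fundamental_right_zero
  rw [h]
  simp

/-- The `s`-derivative of `G` corrected by the contribution of the trace `G(1, ·)`. -/
def SymbolData.corrected (S : SymbolData lam) (G : ℝ → ℝ → ℝ) (s t : ℝ) : ℝ :=
  pdx G s t - volterra (pdx S.fundamental) (G 1) s t

theorem SymbolData.pdx_corrected (S : SymbolData lam) (hG : ContDiff ℝ 3 (uncurry G)) :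
    pdx (S.corrected G) =
    fun s t => pdx (pdx G) s t - volterra (pdx (pdx S.fundamental)) (G 1) s t := by
  have hg : Continuous (G 1) := hG.continuous.comp (Continuous.prodMk_right 1)
  have hG2 : ContDiff ℝ 2 (uncurry (pdx G)) := contDiff_pdx (n := 2) hG
  exact funext₂ fun s t => ((hasDerivAt_pdx (hG2.of_le one_le_two) s t).sub
    (hasDerivAt_volterra_fst (contDiff_pdx (n := 1) (S.contDiff_fundamental 2)) hg s t)).deriv

theorem SymbolData.pdy_corrected (S : SymbolData lam) (hG : ContDiff ℝ 3 (uncurry G)) :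
    pdy (S.corrected G) =
    fun s t => pdy (pdx G) s t - volterra (pdy (pdx S.fundamental)) (G 1) s t := by
  have hg : Continuous (G 1) := hG.continuous.comp (Continuous.prodMk_right 1)
  have hG2 : ContDiff ℝ 2 (uncurry (pdx G)) := contDiff_pdx (n := 2) hG
  have h := hasDerivAt_volterra_snd (contDiff_pdx (n := 1) (S.contDiff_fundamental 2)) hg
  simp only [S.pdx_fundamental_right_zero, zero_mul, zero_add] at h
  exact funext₂ fun s t => ((hasDerivAt_pdy (hG2.of_le one_le_two) s t).sub (h s t)).deriv

theorem SymbolData.contDiff_corrected (S : SymbolData lam) (hG : ContDiff ℝ 3 (uncurry G)) :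
    ContDiff ℝ 2 (uncurry (S.corrected G)) := by
  have hg : Continuous (G 1) := hG.continuous.comp (Continuous.prodMk_right 1)
  have hG2 : ContDiff ℝ 2 (uncurry (pdx G)) := contDiff_pdx (n := 2) hG
  have hE : ContDiff ℝ 2 (uncurry (pdx S.fundamental)) :=
    contDiff_pdx (n := 2) (S.contDiff_fundamental 3)
  have hE1 : ContDiff ℝ 1 (uncurry (pdx S.fundamental)) := hE.of_le one_le_two
  have h := hasDerivAt_volterra_snd hE1 hg
  simp only [S.pdx_fundamental_right_zero, zero_mul, zero_add] at h
  have hV := contDiff_succ_of_partials (n := 1) (hasDerivAt_volterra_fst hE1 hg) h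
    (contDiff_one_volterra (contDiff_pdx (n := 1) hE) hg)
    (contDiff_one_volterra (contDiff_pdy (n := 1) hE) hg)
  exact hG2.sub hV

theorem SymbolData.integral_corrected (S : SymbolData lam) (hG : ContDiff ℝ 3 (uncurry G))
    (s t : ℝ) :
    ∫ σ in (1 : ℝ)..s, S.corrected G σ t =
      G s t - G 1 t - volterra S.fundamental (G 1) s t := by
  have hg : Continuous (G 1) := hG.continuous.comp (Continuous.prodMk_right 1)
  have hc : Continuous fun σ => S.corrected G σ t :=
    (S.contDiff_corrected hG).continuous.comp (Continuous.prodMk_left t)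
  rw [intervalIntegral.integral_eq_sub_of_hasDerivAt (f' := fun σ => S.corrected G σ t)
    (f := fun σ => G σ t - volterra S.fundamental (G 1) σ t)
    (fun σ _ => (hasDerivAt_pdx (hG.of_le (by norm_num)) σ t).sub
      (hasDerivAt_volterra_fst (S.contDiff_fundamental 1) hg σ t)) (hc.intervalIntegrable _ _)]
  have h1 : volterra S.fundamental (G 1) 1 t = 0 := by
    simp [volterra, S.fundamental_left_zero]
  rw [h1]
  ring

theorem SymbolData.corrected_eq (S : SymbolData lam) (hG : ContDiff ℝ 3 (uncurry G)) {s t : ℝ}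
    (h : 2 * pdx (pdx (pdx G)) s t + 6 * pdx (pdy (pdy G)) s t + 2 * pdx G s t = lam * G s t) :
    pdy (pdy (S.corrected G)) s t + pdx (pdx (S.corrected G)) s t / 3 =
      lam / 6 * (∫ σ in (1 : ℝ)..s, S.corrected G σ t) - S.corrected G s t / 3 := by
  have hg : Continuous (G 1) := hG.continuous.comp (Continuous.prodMk_right 1)
  have hGx : ContDiff ℝ 2 (uncurry (pdx G)) := contDiff_pdx (n := 2) hG
  have hE : ContDiff ℝ 3 (uncurry S.fundamental) := S.contDiff_fundamental 3
  have hEx : ContDiff ℝ 2 (uncurry (pdx S.fundamental)) := contDiff_pdx (n := 2) hE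
  have comm {f : ℝ → ℝ → ℝ} (hf : ContDiff ℝ 3 (uncurry f)) :
      pdx (pdy (pdy f)) = pdy (pdy (pdx f)) := by
    rw [pdx_pdy_comm (contDiff_pdy (n := 2) hf), pdx_pdy_comm (hf.of_le (by norm_num))]
  have hyy : pdy (pdy (S.corrected G)) s t = pdy (pdy (pdx G)) s t -
      (lam / 6 * G 1 t + volterra (pdy (pdy (pdx S.fundamental))) (G 1) s t) := by
    rw [S.pdy_corrected hG]
    have h1 := hasDerivAt_volterra_snd (contDiff_pdy (n := 1) hEx) hg s t
    rw [S.pdy_pdx_fundamental_right_zero] at h1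
    exact ((hasDerivAt_pdy (contDiff_pdy (n := 1) hGx) s t).sub h1).deriv
  have hxx : pdx (pdx (S.corrected G)) s t = pdx (pdx (pdx G)) s t -
      volterra (pdx (pdx (pdx S.fundamental))) (G 1) s t := by
    rw [S.pdx_corrected hG]
    exact ((hasDerivAt_pdx (contDiff_pdx (n := 1) hGx) s t).sub
      (hasDerivAt_volterra_fst (contDiff_pdx (n := 1) hEx) hg s t)).deriv
  have hEyy : Continuous (uncurry (pdy (pdy (pdx S.fundamental)))) :=
    (contDiff_pdy (n := 0) (contDiff_pdy (n := 1) hEx)).continuous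
  have hEE : pdx (pdx (pdx S.fundamental)) = fun s t =>
      (-3) * pdy (pdy (pdx S.fundamental)) s t +
        1 * (lam / 2 * S.fundamental s t + (-1) * pdx S.fundamental s t) := by
    funext s t
    have := S.fundamental_eq s t
    rw [comm hE] at this
    linarith
  have hV : volterra (pdx (pdx (pdx S.fundamental))) (G 1) s t =
      -3 * volterra (pdy (pdy (pdx S.fundamental))) (G 1) s t +
        1 * (lam / 2 * volterra S.fundamental (G 1) s t +
          (-1) * volterra (pdx S.fundamental) (G 1) s t) := by
    have hc : Continuous (uncurry fun s t => lam / 2 * S.fundamental s t +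
        (-1) * pdx S.fundamental s t) :=
      (hE.continuous.const_mul (lam / 2)).add (hEx.continuous.const_mul (-1))
    rw [hEE, volterra_add_mul hEyy hc hg,
      volterra_add_mul hE.continuous hEx.continuous hg]
  rw [comm hG] at h
  rw [hyy, hxx, S.integral_corrected hG, hV, corrected]
  linarith

/-- A function satisfying the homogeneous problem in rotated coordinates vanishes. -/
theorem SymbolData.eq_zero_of_homogeneous (S : SymbolData lam) (hG : ContDiff ℝ 3 (uncurry G))
    (heq : ∀ s t, 0 ≤ t → t < s → s < 2 - t →
      2 * pdx (pdx (pdx G)) s t + 6 * pdx (pdy (pdy G)) s t + 2 * pdx G s t = lam * G s t)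
    (h0 : ∀ s ∈ Ioo (0 : ℝ) 2, G s 0 = 0) (h1 : ∀ s ∈ Ioo (0 : ℝ) 2, pdy G s 0 = 0)
    (hd : ∀ t ∈ Ico (0 : ℝ) 1, G t t = 0) {s t : ℝ} (ht : 0 ≤ t) (hts : t < s)
    (hst : s < 2 - t) : G s t = 0 := by
  have hg : Continuous (G 1) := hG.continuous.comp (Continuous.prodMk_right 1)
  have hE : Continuous (uncurry S.fundamental) := (S.contDiff_fundamental 0).continuous
  have hpdx {f : ℝ → ℝ → ℝ} (hf : ∀ s ∈ Ioo (0 : ℝ) 2, f s 0 = 0) (s : ℝ)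
      (hs : s ∈ Ioo (0 : ℝ) 2) : pdx f s 0 = 0 := by
    have : (fun s' => f s' 0) =ᶠ[𝓝 s] fun _ => 0 :=
      Filter.eventuallyEq_of_mem (isOpen_Ioo.mem_nhds hs) hf
    rw [pdx, this.deriv_eq, deriv_const]
  have hH {s t : ℝ} (ht : 0 ≤ t) (hts : t < s) (hst : s < 2 - t) : S.corrected G s t = 0 := by
    refine unique_continuation (S.contDiff_corrected hG) (lam / 6)
      (fun s t ht hts hst => S.corrected_eq hG (heq s t ht hts hst)) (fun s hs => ?_)
      (fun s hs => ?_) ht hts hst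
    · simp [corrected, volterra, hpdx h0 s hs]
    · rw [S.pdy_corrected hG, ← pdx_pdy_comm (hG.of_le (by norm_num))]
      simp [volterra, hpdx h1 s hs]
  have hY {s t : ℝ} (ht : 0 ≤ t) (hts : t < s) (hst : s < 2 - t) :
      G s t - G 1 t - volterra S.fundamental (G 1) s t = 0 := by
    rw [← S.integral_corrected hG, intervalIntegral.integral_congr (g := fun _ => 0),
      intervalIntegral.integral_zero]
    intro σ hσ
    have hm : uIcc 1 s ⊆ Ioo t (2 - t) :=
      ordConnected_Ioo.uIcc_subset ⟨by linarith, by linarith⟩ ⟨hts, hst⟩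
    exact hH ht (hm hσ).1 (hm hσ).2
  have hYd (t : ℝ) (ht : t ∈ Ico (0 : ℝ) 1) : G 1 t = - volterra S.fundamental (G 1) t t := by
    have hc : Continuous fun s => G s t - G 1 t - volterra S.fundamental (G 1) s t :=
      ((hG.continuous.comp (Continuous.prodMk_left t)).sub continuous_const).sub
        ((continuous_volterra hE hg).comp (Continuous.prodMk_left t))
    have hcl : IsClosed {s | G s t - G 1 t - volterra S.fundamental (G 1) s t = 0} :=
      isClosed_eq hc continuous_const
    have hsub : Ioo t (2 - t) ⊆ {s | G s t - G 1 t - volterra S.fundamental (G 1) s t = 0} :=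
      fun s hs => hY ht.1 hs.1 hs.2
    have hlt : t < 2 - t := by linarith [ht.2]
    have hmem := hcl.closure_subset_iff.2 hsub
      ((closure_Ioo hlt.ne).symm ▸ left_mem_Icc.2 hlt.le : t ∈ closure (Ioo t (2 - t)))
    have : G t t - G 1 t - volterra S.fundamental (G 1) t t = 0 := hmem
    rw [hd t ht] at this
    linarith
  obtain ⟨C, hC⟩ := ((isCompact_Icc (a := (-1 : ℝ)) (b := 0)).prod
    (isCompact_Icc (a := (0 : ℝ)) (b := 1))).exists_bound_of_continuousOn hE.continuousOn
  have hg0 (t : ℝ) (ht : t ∈ Ico (0 : ℝ) 1) : G 1 t = 0 := by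
    refine eq_zero_of_abs_le_integral hg (C := C) (fun t ht => ?_) ht
    rw [hYd t ht, abs_neg, volterra, ← intervalIntegral.integral_const_mul, ← Real.norm_eq_abs]
    refine intervalIntegral.norm_integral_le_of_norm_le ht.1 (Eventually.of_forall fun τ hτ => ?_)
      (Continuous.intervalIntegrable (by fun_prop) _ _)
    rw [norm_mul, ← Real.norm_eq_abs]
    refine mul_le_mul_of_nonneg_right (hC (t - 1, t - τ) ?_) (norm_nonneg _)
    have := ht.1
    have := ht.2
    have := hτ.1
    have := hτ.2
    exact ⟨⟨by dsimp only; linarith, by dsimp only; linarith⟩,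
      ⟨by dsimp only; linarith, by dsimp only; linarith⟩⟩
  have ht1 : t < 1 := by linarith
  have hv : volterra S.fundamental (G 1) s t = 0 := by
    rw [volterra, intervalIntegral.integral_congr (g := fun _ => 0),
      intervalIntegral.integral_zero]
    intro τ hτ
    rw [uIcc_of_le ht] at hτ
    simp [hg0 τ ⟨hτ.1, hτ.2.trans_lt ht1⟩]
  have := hY ht hts hst
  rw [hv, hg0 t ⟨ht, ht1⟩] at this
  linarith

/-- A `C³` solution of the homogeneous kernel problem vanishes on `T`. -/
theorem SymbolData.eq_zero_on_triangle (S : SymbolData lam) {d : ℝ → ℝ → ℝ}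
    (hdC : ContDiff ℝ 3 (uncurry d))
    (heq : ∀ x y, (x, y) ∈ T →
      pdx (pdx (pdx d)) x y + pdy (pdy (pdy d)) x y + pdx d x y + pdy d x y = lam * d x y)
    (hdiag : ∀ x ∈ Icc (0 : ℝ) 1, d x x = 0) (hdx : ∀ x ∈ Icc (0 : ℝ) 1, pdx d x x = 0)
    (hleft : ∀ y ∈ Icc (0 : ℝ) 1, d 0 y = 0) {x y : ℝ} (hxy : (x, y) ∈ T) : d x y = 0 := by
  have hd1 : ContDiff ℝ 1 (uncurry d) := hdC.of_le (by norm_num)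
  have hdy (x : ℝ) (hx : x ∈ Ioo (0 : ℝ) 1) : pdy d x x = 0 := by
    have h := (hasDerivAt_comp_partials hd1 (hasDerivAt_id x) (hasDerivAt_id x)).deriv
    have he : (fun r => d (id r) (id r)) =ᶠ[𝓝 x] fun _ => 0 :=
      Filter.eventuallyEq_of_mem (isOpen_Ioo.mem_nhds hx)
        fun r hr => hdiag r (Ioo_subset_Icc_self hr)
    rw [he.deriv_eq, deriv_const] at h
    simp only [id, one_mul, hdx x (Ioo_subset_Icc_self hx), zero_add] at h
    exact h.symm
  have hinner {x y : ℝ} (hx : 0 < x) (hxy : x ≤ y) (hy : y < 1) : d x y = 0 := by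
    have h := S.eq_zero_of_homogeneous (G := rotated d) (contDiff_rotated (n := 3) hdC)
      (fun s t ht hts hst => ?_) (fun s hs => ?_) (fun s hs => ?_) (fun t ht => ?_)
      (s := x + y) (t := y - x) (by linarith) (by linarith) (by linarith)
    · convert h using 1
      simp only [rotated]
      congr 1 <;> ring
    · rw [rotated_eq hdC]
      exact heq _ _ ⟨by dsimp only; linarith, by dsimp only; linarith, by dsimp only; linarith⟩
    · simp only [rotated, sub_zero, add_zero]
      exact hdiag _ ⟨by linarith [hs.1], by linarith [hs.2]⟩
    · rw [pdy_rotated hd1]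
      simp only [rotated, pdir, sub_zero, add_zero]
      rw [hdx _ ⟨by linarith [hs.1], by linarith [hs.2]⟩,
        hdy _ ⟨by linarith [hs.1], by linarith [hs.2]⟩]
      ring
    · simp only [rotated, sub_self, zero_div, add_self_div_two]
      exact hleft t ⟨ht.1, ht.2.le⟩
  obtain ⟨hx, hle, hy⟩ := hxy
  dsimp only at hx hle hy
  have hc : Continuous fun ε : ℝ => uncurry d ((1 - ε) * x + ε / 2, (1 - ε) * y + ε / 2) :=
    hdC.continuous.comp (by fun_prop)
  have hcl : IsClosed {ε : ℝ | uncurry d ((1 - ε) * x + ε / 2, (1 - ε) * y + ε / 2) = 0} :=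
    isClosed_eq hc continuous_const
  have hsub : Ioo (0 : ℝ) 1 ⊆
      {ε : ℝ | uncurry d ((1 - ε) * x + ε / 2, (1 - ε) * y + ε / 2) = 0} := fun ε hε =>
    hinner (by nlinarith [hε.1, hε.2]) (by nlinarith [hε.1, hε.2]) (by nlinarith [hε.1, hε.2])
  have hmem : (0 : ℝ) ∈ closure (Ioo (0 : ℝ) 1) := by
    rw [closure_Ioo zero_ne_one]
    exact left_mem_Icc.2 zero_le_one
  have := hcl.closure_subset_iff.2 hsub hmem
  simpa using this

end uniqueness

/-- Existence and uniqueness (as a function on `T`) of the observer kernel. -/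
theorem observer_kernel_exists_unique (lam : ℝ) (hlam : 0 < lam) :
    ∃ p : ℝ → ℝ → ℝ, IsObserverKernel lam p ∧
      ∀ p' : ℝ → ℝ → ℝ, IsObserverKernel lam p' →
        ∀ x y : ℝ, (x, y) ∈ T → p' x y = p x y := by
  obtain ⟨S⟩ := nonempty_symbolData hlam
  have hp : ContDiff ℝ 3 (uncurry S.observer) := S.contDiff_observer 3
  refine ⟨S.observer, ⟨hp, fun x y _ => S.observer_eq x y, fun x _ => S.observer_diagonal x,
    fun x _ => S.pdx_observer_diagonal x, fun y _ => S.observer_left_zero y⟩, ?_⟩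
  rintro p' ⟨hp', heq, hdiag, hdx, hleft⟩ x y hxy
  have ex := pdx_add_mul (hp'.of_le (by norm_num)) (hp.of_le (by norm_num)) 1 (-1)
  have ey := pdy_add_mul (hp'.of_le (by norm_num)) (hp.of_le (by norm_num)) 1 (-1)
  have hpx : ContDiff ℝ 2 (uncurry (pdx S.observer)) := contDiff_pdx (n := 2) hp
  have hpy : ContDiff ℝ 2 (uncurry (pdy S.observer)) := contDiff_pdy (n := 2) hp
  have hpx' : ContDiff ℝ 2 (uncurry (pdx p')) := contDiff_pdx (n := 2) hp'
  have hpy' : ContDiff ℝ 2 (uncurry (pdy p')) := contDiff_pdy (n := 2) hp'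
  have h := S.eq_zero_on_triangle (d := fun x y => 1 * p' x y + -1 * S.observer x y)
    (contDiff_add_mul (n := 3) hp' hp 1 (-1)) (fun x y hxy => ?_) (fun x hx => ?_)
    (fun x hx => ?_) (fun y hy => ?_) hxy
  · linarith
  · rw [ex, ey, pdx_add_mul (hpx'.of_le one_le_two) (hpx.of_le one_le_two),
      pdy_add_mul (hpy'.of_le one_le_two) (hpy.of_le one_le_two),
      pdx_add_mul (contDiff_pdx (n := 1) hpx') (contDiff_pdx (n := 1) hpx),
      pdy_add_mul (contDiff_pdy (n := 1) hpy') (contDiff_pdy (n := 1) hpy)]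
    linear_combination heq x y hxy - S.observer_eq x y
  · simp [hdiag x hx, S.observer_diagonal x]
  · rw [ex]
    simp [hdx x hx, S.pdx_observer_diagonal x]
  · simp [hleft y hy, S.observer_left_zero y]
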